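/- arXiv:0806.1188 — 3 statements merged into one kernel-verified Lean document; each statement's English description precedes it below -/
import Mathlib

section
/- Let k > r ≥ 2 be integers and let Γ be a k-free group. Let P ≤ Γ be a finitely generated subgroup of rank at most r, let R ≤ P be a subgroup of rank exactly r, and let C ≤ Γ be an infinite cyclic subgroup such that the subgroup ⟨R ∪ C⟩ generated by R and C has rank exactly r. Then the subgroup ⟨P ∪ C⟩ generated by P and C has rank at most r. -/
/-- The rank of a subgroup: the minimal cardinality of a finite generating set,
or `⊤` if the subgroup is not finitely generated. -/
noncomputable def Subgroup.rk {Γ : Type*} [Group Γ] (H : Subgroup Γ) : ℕ∞ :=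
  sInf {n : ℕ∞ | ∃ S : Finset Γ, (S.card : ℕ∞) = n ∧ Subgroup.closure (S : Set Γ) = H}

/-- A group is `k`-free if every finitely generated subgroup of rank at most `k` is free. -/
def IsKFree (k : ℕ) (Γ : Type*) [Group Γ] : Prop :=
  ∀ H : Subgroup Γ, H.rk ≤ (k : ℕ∞) → IsFreeGroup H

/-!
If `⟨P ∪ Q⟩` has the largest possible rank `rk P + rk Q`, then minimal generating sets of `P` and
`Q` together form a generating set of the free group `⟨P ∪ Q⟩` that is no larger than a basis.
Free groups of finite rank are Hopfian, so it is a basis, and `⟨P ∪ Q⟩` is the free product of `P`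
and `Q`. For `R ≤ P` and `S ≤ Q` the subgroup `⟨R ∪ S⟩` is then the free product of `R` and `S`,
which are free by Nielsen–Schreier, and its rank is `rk R + rk S`. So a defect in the rank of
`⟨R ∪ S⟩` forces one in the rank of `⟨P ∪ Q⟩`; here `S = Q = C` is infinite cyclic, of rank one.
-/

open Function Monoid Subgroup

section ResiduallyFinite

theorem exists_perm_finset_coe_eq_mul {G : Type*} [Group G] (T : Finset G) (a : G) :
    ∃ σ : Equiv.Perm T, ∀ t : T, a * t ∈ T → (σ t : G) = a * t := by
  classical
  let e : {t : T // a * t ∈ T} ≃ {t : T // a⁻¹ * t ∈ T} :=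
    { toFun := fun t => ⟨⟨a * t.1, t.2⟩, by simp⟩
      invFun := fun t => ⟨⟨a⁻¹ * t.1, t.2⟩, by simp⟩
      left_inv := fun t => by simp
      right_inv := fun t => by simp }
  exact ⟨e.extendSubtype, fun t ht => by rw [e.extendSubtype_apply_of_mem t ht]; rfl⟩

theorem exists_freeGroup_hom_perm_finset {α : Type*} (T : Finset (FreeGroup α)) :
    ∃ f : FreeGroup α →* Equiv.Perm T, ∀ (x : α × Bool) (t : T),
      FreeGroup.mk [x] * t ∈ T → (f (FreeGroup.mk [x]) t : FreeGroup α) = FreeGroup.mk [x] * t := by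
  choose σ hσ using fun a : α => exists_perm_finset_coe_eq_mul T (FreeGroup.of a)
  refine ⟨FreeGroup.lift σ, ?_⟩
  rintro ⟨a, _ | _⟩ t ht
  · have hmk : FreeGroup.mk [(a, false)] = (FreeGroup.of a)⁻¹ := by
      simp [FreeGroup.of, FreeGroup.inv_mk, FreeGroup.invRev]
    rw [hmk] at ht ⊢
    have hσt : σ a ⟨(FreeGroup.of a)⁻¹ * t, ht⟩ = t := by
      apply Subtype.ext
      rw [hσ] <;> simp
    rw [map_inv, FreeGroup.lift_apply_of, Equiv.Perm.inv_eq_iff_eq.2 hσt.symm]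
  · change (FreeGroup.lift σ (FreeGroup.of a) t : FreeGroup α) = FreeGroup.of a * t
    rw [FreeGroup.lift_apply_of]
    exact hσ a t ht

-- A word is detected by letting it act on the finite set of its suffixes, starting from `1`.
theorem exists_freeGroup_hom_perm_ne_one {α : Type*} {w : FreeGroup α} (hw : w ≠ 1) :
    ∃ (T : Finset (FreeGroup α)) (f : FreeGroup α →* Equiv.Perm T), f w ≠ 1 := by
  classical
  let T : Finset (FreeGroup α) := (w.toWord.tails.map FreeGroup.mk).toFinset
  have mem_T {l : List (α × Bool)} (hl : l <:+ w.toWord) : FreeGroup.mk l ∈ T := by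
    simp only [T, List.mem_toFinset, List.mem_map, List.mem_tails]
    exact ⟨l, hl, rfl⟩
  obtain ⟨f, hf⟩ := exists_freeGroup_hom_perm_finset T
  let one : T := ⟨1, mem_T List.nil_suffix⟩
  have apply_one (l : List (α × Bool)) (hl : l <:+ w.toWord) :
      (f (FreeGroup.mk l) one : FreeGroup α) = FreeGroup.mk l := by
    induction l with
    | nil => simp [one, ← FreeGroup.one_eq_mk]
    | cons x l ih =>
      have hcons : FreeGroup.mk (x :: l) = FreeGroup.mk [x] * FreeGroup.mk l := by
        simp [FreeGroup.mul_mk]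
      have ih := ih ((List.suffix_cons x l).trans hl)
      have hmem := mem_T hl
      rw [hcons, ← ih] at hmem
      rw [hcons, map_mul, Equiv.Perm.mul_apply, hf x _ hmem, ih]
  refine ⟨T, f, fun hfw => hw ?_⟩
  have hw_one := apply_one w.toWord List.suffix_rfl
  rw [FreeGroup.mk_toWord, hfw] at hw_one
  exact hw_one.symm

instance residuallyFinite_of_isFreeGroup {F : Type*} [Group F] [IsFreeGroup F] :
    Group.ResiduallyFinite F := by
  rw [Group.residuallyFinite_iff_forall_finiteIndex]
  intro g hg
  by_contra hne
  have hne' : IsFreeGroup.toFreeGroup F g ≠ 1 := by simpa using hne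
  obtain ⟨T, f, hf⟩ := exists_freeGroup_hom_perm_ne_one hne'
  exact hf (hg (f.comp (IsFreeGroup.toFreeGroup F).toMonoidHom).ker)

instance finite_monoidHom_of_fg {G Q : Type*} [Group G] [Group.FG G] [Group Q] [Finite Q] :
    Finite (G →* Q) := by
  obtain ⟨α, _, φ, hφ⟩ := Group.fg_iff_exists_freeGroup_hom_surjective_finite.1 ‹Group.FG G›
  have : Finite (FreeGroup α →* Q) := .of_equiv _ FreeGroup.lift
  exact .of_injective (fun ψ : G →* Q => ψ.comp φ) fun _ _ => (MonoidHom.cancel_right hφ).1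

-- Malcev: precomposition with `φ` permutes the finite set of homomorphisms `G →* G ⧸ N`.
theorem injective_of_surjective_of_residuallyFinite {G : Type*} [Group G] [Group.FG G]
    [Group.ResiduallyFinite G] {φ : G →* G} (hφ : Surjective φ) : Injective φ := by
  rw [injective_iff_map_eq_one]
  intro g hg
  refine Group.residuallyFinite_iff_forall_finiteIndexNormalSubgroup.1 ‹_› g fun N => ?_
  have hcomp : Surjective fun ψ : G →* G ⧸ N.toSubgroup => ψ.comp φ :=
    Finite.surjective_of_injective fun _ _ => (MonoidHom.cancel_right hφ).1
  obtain ⟨ψ, hψ⟩ := hcomp (QuotientGroup.mk' N.toSubgroup)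
  have hmk : QuotientGroup.mk' N.toSubgroup g = 1 := by
    rw [← hψ, MonoidHom.comp_apply, hg, map_one]
  exact (QuotientGroup.eq_one_iff g).1 hmk

end ResiduallyFinite

theorem enatCard_sigma {ι : Type*} [Fintype ι] (X : ι → Type*) :
    ENat.card (Σ i, X i) = ∑ i, ENat.card (X i) := by
  classical
  by_cases hX : ∀ i, Finite (X i)
  · simp only [ENat.card_eq_coe_natCard, Nat.card_sigma, Nat.cast_sum]
  · obtain ⟨i, hi⟩ := not_forall.1 hX
    have : Infinite (X i) := not_finite_iff_infinite.1 hi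
    have : Infinite (Σ i, X i) := .of_injective (Sigma.mk i) sigma_mk_injective
    rw [ENat.card_eq_top_of_infinite, eq_comm, ENat.sum_eq_top]
    exact ⟨i, Finset.mem_univ i, ENat.card_eq_top_of_infinite⟩

theorem enatCard_le_of_surjective_of_basis {F H X Y : Type*} [Group F] [Group H]
    (b : FreeGroupBasis X F) (c : FreeGroupBasis Y H) {f : F →* H} (hf : Surjective f) :
    ENat.card Y ≤ ENat.card X := by
  let A := Multiplicative (ZMod 2)
  have hA : ENat.card A = 2 := by simp [A]
  have hinj : Injective fun φ : Y → A => b.lift.symm ((c.lift φ).comp f) :=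
    b.lift.symm.injective.comp fun _ _ h => c.lift.injective ((MonoidHom.cancel_right hf).1 h)
  have hpow := ENat.card_le_card_of_injective hinj
  rw [ENat.card_fun, ENat.card_fun, hA] at hpow
  by_contra! hlt
  obtain ⟨n, hn⟩ := ENat.ne_top_iff_exists.1 hlt.ne_top
  rw [← hn] at hlt hpow
  have hle : (2 : ℕ∞) ^ (n + 1 : ℕ∞) ≤ 2 ^ (n : ℕ∞) :=
    (ENat.epow_right_mono two_ne_zero (Order.add_one_le_of_lt hlt)).trans hpow
  have hlt_succ : 2 ^ n < 2 ^ (n + 1) := Nat.pow_lt_pow_succ one_lt_two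
  exact hlt_succ.not_ge (by exact_mod_cast hle)

section Rank

variable {Γ : Type*} [Group Γ] {H : Subgroup Γ}

theorem rk_range_le {F X : Type*} [Group F] (b : FreeGroupBasis X F) (f : F →* Γ) :
    f.range.rk ≤ ENat.card X := by
  classical
  cases finite_or_infinite X with
  | inr _ => simp
  | inl _ =>
    have := Fintype.ofFinite X
    have hlift : f.comp b.repr.symm.toMonoidHom = FreeGroup.lift (f ∘ b) := by
      ext x
      simp only [FreeGroup.lift_apply_of]
      rfl
    have hclosure : closure (Finset.univ.image (f ∘ b) : Set Γ) = f.range := by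
      rw [Finset.coe_image, Finset.coe_univ, Set.image_univ, ← FreeGroup.range_lift_eq_closure,
        ← hlift, MonoidHom.range_comp,
        MonoidHom.range_eq_top_of_surjective _ b.repr.symm.surjective, MonoidHom.range_eq_map]
    calc f.range.rk ≤ (Finset.univ.image (f ∘ b)).card := sInf_le ⟨_, rfl, hclosure⟩
      _ ≤ ENat.card X := by
          rw [ENat.card_eq_coe_fintype_card]
          exact_mod_cast Finset.card_image_le

theorem exists_freeGroup_hom_range_eq {n : ℕ} (h : H.rk = n) :
    ∃ f : FreeGroup (Fin n) →* Γ, f.range = H := by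
  have hne : {m : ℕ∞ | ∃ S : Finset Γ, (S.card : ℕ∞) = m ∧ closure (S : Set Γ) = H}.Nonempty := by
    by_contra hempty
    rw [Subgroup.rk, Set.not_nonempty_iff_eq_empty.1 hempty, sInf_empty] at h
    exact ENat.top_ne_natCast n h
  obtain ⟨S, hcard, hS⟩ := csInf_mem hne
  have e : S ≃ Fin n := S.equivFinOfCardEq (by exact_mod_cast hcard.trans h)
  refine ⟨FreeGroup.lift fun i => (e.symm i : Γ), ?_⟩
  rw [FreeGroup.range_lift_eq_closure, ← hS]
  congr 1
  exact (e.symm.surjective.range_comp (Subtype.val : S → Γ)).trans Subtype.range_coe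

theorem rk_eq_enatCard_of_basis {X : Type*} (b : FreeGroupBasis X H) : H.rk = ENat.card X := by
  refine le_antisymm (by simpa using rk_range_le b H.subtype) ?_
  rcases eq_or_ne H.rk ⊤ with htop | hfin
  · simp [htop]
  obtain ⟨n, hn⟩ := ENat.ne_top_iff_exists.1 hfin
  obtain ⟨f, rfl⟩ := exists_freeGroup_hom_range_eq hn.symm
  simpa [← hn] using
    enatCard_le_of_surjective_of_basis (.ofFreeGroup (Fin n)) b f.rangeRestrict_surjective

theorem rk_range_of_injective {F X : Type*} [Group F] (b : FreeGroupBasis X F) {f : F →* Γ}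
    (hf : Injective f) : f.range.rk = ENat.card X :=
  rk_eq_enatCard_of_basis (b.map (MonoidHom.ofInjective hf))

theorem injective_of_enatCard_le_rk_range {F X : Type*} [Group F] [Finite X]
    (b : FreeGroupBasis X F) {f : F →* Γ} [IsFreeGroup f.range]
    (h : ENat.card X ≤ f.range.rk) : Injective f := by
  have : IsFreeGroup F := b.isFreeGroup
  have : Group.FG F := Group.fg_of_surjective (f := b.repr.symm.toMonoidHom) b.repr.symm.surjective
  let c := IsFreeGroup.basis f.range
  have hcard : ENat.card (IsFreeGroup.Generators f.range) = ENat.card X := by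
    rw [← rk_eq_enatCard_of_basis c]
    exact (rk_range_le b f).antisymm h
  have : Finite (IsFreeGroup.Generators f.range) := by
    rw [← ENat.card_lt_top, hcard]
    exact ENat.card_lt_top_of_finite
  obtain ⟨e⟩ : Nonempty (IsFreeGroup.Generators f.range ≃ X) := by
    rw [← Finite.card_eq]
    simpa [ENat.card_eq_coe_natCard] using hcard
  let σ : f.range ≃* F := (c.reindex e).repr.trans b.repr.symm
  have hinj : Injective (σ.toMonoidHom.comp f.rangeRestrict) :=
    injective_of_surjective_of_residuallyFinite
      (σ.surjective.comp f.rangeRestrict_surjective)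
  exact MonoidHom.rangeRestrict_injective_iff.1 (.of_comp (f := σ) hinj)

theorem rk_zpowers {g : Γ} (hg : g ≠ 1) : (zpowers g).rk = 1 := by
  refine le_antisymm (sInf_le ⟨{g}, by simp, by simp [zpowers_eq_closure]⟩) ?_
  rw [Order.one_le_iff_ne_zero]
  intro h0
  obtain ⟨f, hf⟩ := exists_freeGroup_hom_range_eq (n := 0) h0
  refine zpowers_ne_bot.2 hg (hf.symm.trans ?_)
  rw [MonoidHom.range_eq_map, ← FreeGroup.closure_range_of]
  simp

end Rank

section FreeProduct

variable {ι : Type*}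

theorem coprodI_map_injective {M N : ι → Type*} [∀ i, Monoid (M i)] [∀ i, Monoid (N i)]
    {g : ∀ i, M i →* N i} (hg : ∀ i, Injective (g i)) :
    Injective (CoprodI.lift fun i => CoprodI.of.comp (g i) : CoprodI M →* CoprodI N) := by
  classical
  let mapLetter : (Σ i, M i) → Σ i, N i := Sigma.map id fun i => g i
  let mapWord (w : CoprodI.Word M) : CoprodI.Word N :=
    { toList := w.toList.map mapLetter
      ne_one := by
        simp only [List.mem_map]
        rintro _ ⟨l, hl, rfl⟩
        exact (map_ne_one_iff (g l.1) (hg l.1)).2 (w.ne_one l hl)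
      chain_ne := List.isChain_map_of_isChain mapLetter (fun _ _ h => h) w.chain_ne }
  have mapWord_injective : Injective mapWord := fun _ _ h =>
    CoprodI.Word.ext <| List.map_injective_iff.2 (injective_id.sigma_map hg) <|
      congrArg CoprodI.Word.toList h
  have prod_mapWord (w : CoprodI.Word M) :
      (mapWord w).prod = CoprodI.lift (fun i => CoprodI.of.comp (g i)) w.prod := by
    simp only [CoprodI.Word.prod, mapWord, map_list_prod, List.map_map]
    congr 2
  intro x y hxy
  obtain ⟨w, rfl⟩ := CoprodI.Word.equiv.symm.surjective x
  obtain ⟨v, rfl⟩ := CoprodI.Word.equiv.symm.surjective y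
  have hprod : (mapWord w).prod = (mapWord v).prod :=
    (prod_mapWord w).trans (hxy.trans (prod_mapWord v).symm)
  rw [mapWord_injective (CoprodI.Word.equiv.symm.injective hprod)]

theorem coprodI_lift_comp_injective {Γ : Type*} [Monoid Γ] {M N : ι → Type*} [∀ i, Monoid (M i)]
    [∀ i, Monoid (N i)] {f : ∀ i, N i →* Γ} (hf : Injective (CoprodI.lift f))
    {g : ∀ i, M i →* N i} (hg : ∀ i, Injective (g i)) :
    Injective (CoprodI.lift fun i => (f i).comp (g i)) := by
  have hcomp : CoprodI.lift (fun i => (f i).comp (g i)) =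
      (CoprodI.lift f).comp (CoprodI.lift fun i => CoprodI.of.comp (g i)) := by
    ext i x
    simp only [MonoidHom.comp_apply, CoprodI.lift_of]
  rw [hcomp]
  exact hf.comp (coprodI_map_injective hg)

variable {Γ : Type*} [Group Γ] [Fintype ι]

theorem rk_iSup_range_of_injective_lift {F : ι → Type*} [∀ i, Group (F i)]
    [∀ i, IsFreeGroup (F i)] {f : ∀ i, F i →* Γ} (hf : Injective (CoprodI.lift f)) :
    (⨆ i, (f i).range).rk = ∑ i, (f i).range.rk := by
  have hfi (i : ι) : Injective (f i) := by
    rw [← CoprodI.lift_comp_of f i]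
    exact hf.comp (CoprodI.of_injective i)
  let b (i : ι) := IsFreeGroup.basis (F i)
  rw [← CoprodI.range_eq_iSup, rk_range_of_injective (CoprodI.FreeGroupBasis.coprodI b) hf,
    enatCard_sigma]
  exact Finset.sum_congr rfl fun i _ => (rk_range_of_injective (b i) (hfi i)).symm

theorem rk_iSup_le_sum (G : ι → Subgroup Γ) : (⨆ i, G i).rk ≤ ∑ i, (G i).rk := by
  rcases eq_or_ne (∑ i, (G i).rk) ⊤ with htop | hfin
  · exact htop ▸ le_top
  choose n hn using fun i =>
    ENat.ne_top_iff_exists.1 (ENat.sum_ne_top.1 hfin i (Finset.mem_univ i))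
  choose f hf using fun i => exists_freeGroup_hom_range_eq (hn i).symm
  let b := CoprodI.FreeGroupBasis.coprodI fun i => FreeGroupBasis.ofFreeGroup (Fin (n i))
  simpa [CoprodI.range_eq_iSup, enatCard_sigma, hf, ← hn] using rk_range_le b (CoprodI.lift f)

theorem rk_iSup_eq_sum_of_le {G K : ι → Subgroup Γ} [IsFreeGroup ↥(⨆ i, G i)]
    (hfin : ∀ i, (G i).rk ≠ ⊤) (hG : ∑ i, (G i).rk ≤ (⨆ i, G i).rk) (hKG : ∀ i, K i ≤ G i) :
    (⨆ i, K i).rk = ∑ i, (K i).rk := by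
  choose n hn using fun i => ENat.ne_top_iff_exists.1 (hfin i)
  choose f hf using fun i => exists_freeGroup_hom_range_eq (hn i).symm
  have hrange : (CoprodI.lift f).range = ⨆ i, G i := by
    simp only [CoprodI.range_eq_iSup, hf]
  have : IsFreeGroup (CoprodI.lift f).range := hrange ▸ ‹_›
  have hinj : Injective (CoprodI.lift f) := by
    let b := CoprodI.FreeGroupBasis.coprodI fun i => FreeGroupBasis.ofFreeGroup (Fin (n i))
    refine injective_of_enatCard_le_rk_range b ?_
    simpa [hrange, enatCard_sigma, ← hn] using hG
  have hK (i : ι) : ((f i).comp ((K i).comap (f i)).subtype).range = K i := by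
    rw [MonoidHom.range_comp, range_subtype, map_comap_eq_self ((hKG i).trans (hf i).ge)]
  simpa only [hK] using rk_iSup_range_of_injective_lift
    (coprodI_lift_comp_injective hinj fun i => ((K i).comap (f i)).subtype_injective)

end FreeProduct

theorem stmt1_general {Γ : Type*} [Group Γ] {k : ℕ} (hfree : IsKFree k Γ) {P Q R S : Subgroup Γ}
    (hk : P.rk + Q.rk ≤ k) (hRP : R ≤ P) (hSQ : S ≤ Q) (hRS : (R ⊔ S).rk < R.rk + S.rk) :
    (P ⊔ Q).rk < P.rk + Q.rk := by
  let G : Bool → Subgroup Γ := fun i => cond i P Q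
  let K : Bool → Subgroup Γ := fun i => cond i R S
  have hsum : ∑ i, (G i).rk = P.rk + Q.rk := Fintype.sum_bool _
  have hsup : ⨆ i, G i = P ⊔ Q := iSup_bool_eq
  have hKG : ∀ i, K i ≤ G i := Bool.forall_bool.2 ⟨hSQ, hRP⟩
  have : IsFreeGroup ↥(⨆ i, G i) := hfree _ ((rk_iSup_le_sum G).trans (hsum.trans_le hk))
  have hfin : ∀ i, (G i).rk ≠ ⊤ := fun i => ne_top_of_le_ne_top (ENat.natCast_ne_top k) <|
    (Finset.single_le_sum (fun _ _ => zero_le) (Finset.mem_univ i)).trans (hsum.trans_le hk)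
  by_contra! hPQ
  have hRS_eq := rk_iSup_eq_sum_of_le hfin (by rwa [hsum, hsup]) hKG
  rw [iSup_bool_eq, Fintype.sum_bool] at hRS_eq
  exact hRS.ne hRS_eq

/-- Let `k > r ≥ 2`, let `Γ` be `k`-free, let `P ≤ Γ` be finitely generated of rank at most
`r`, let `R ≤ P` have rank exactly `r`, and let `C` be an infinite cyclic subgroup with
`⟨R ∪ C⟩` of rank exactly `r`. Then `⟨P ∪ C⟩` has rank at most `r`. -/
theorem stmt1 {Γ : Type*} [Group Γ] (k r : ℕ) (hr : 2 ≤ r) (hrk : r < k)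
    (hfree : IsKFree k Γ) (P R C : Subgroup Γ)
    (hP : P.rk ≤ (r : ℕ∞)) (hRP : R ≤ P) (hR : R.rk = (r : ℕ∞))
    (hCcyc : ∃ g : Γ, C = Subgroup.zpowers g) (hCinf : Infinite C)
    (hRC : (R ⊔ C).rk = (r : ℕ∞)) :
    (P ⊔ C).rk ≤ (r : ℕ∞) := by
  obtain ⟨g, rfl⟩ := hCcyc
  have hg : g ≠ 1 := by
    rintro rfl
    exact infinite_zpowers.1 (Set.infinite_coe_iff.1 hCinf) IsOfFinOrder.one
  have hC : (zpowers g).rk = 1 := rk_zpowers hg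
  have hPC : P.rk + (zpowers g).rk ≤ r + 1 := by rw [hC]; gcongr
  have hlt : (P ⊔ zpowers g).rk < P.rk + (zpowers g).rk :=
    stmt1_general hfree (hPC.trans (by exact_mod_cast hrk)) hRP le_rfl
      (by rw [hRC, hR, hC]; exact_mod_cast r.lt_succ_self)
  exact Order.le_of_lt_add_one (hlt.trans_le hPC)
end

section
/- Let Γ be a 4-free group, and let P and Q be subgroups of Γ, each of rank exactly 2, such that the intersection P ∩ Q contains a subgroup of rank 2. Then the subgroup ⟨P ∪ Q⟩ generated by P and Q has rank exactly 2. -/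
/-!
As `P ⊔ Q` has rank at most four, it is a free group, on a set `ι` say. The free group on `ι`
embeds in the units of `ℚ⟨xᵢ⟩⟦t⟧` by `i ↦ exp (xᵢ t)`. Suppose that the ranks of `P` and `Q` add
up to at most the rank of `P ⊔ Q` plus one. Comparing linear terms, the left linear relations
between the differences `g - 1`, for `g` in generating sets of `P` and of `Q`, are the left
multiples of a single one. Hence there is a series `m` without scalar terms such that `x - 1` is a
left multiple of `m` for all `x ∈ P ⊓ Q`.

The lowest term of `x - 1` is a Lie element. By comparing degrees in the Poincaré–Birkhoff–Witt
filtration, a nonzero Lie element is a left multiple of the lowest term of `m` only by a scalar.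
So `x - 1` has the same order for all nontrivial `x ∈ P ⊓ Q`. The commutator of two such elements
has a larger order, hence is trivial. So `P ⊓ Q` is commutative, and contains no free group of
rank two.
-/

open scoped PowerSeries TensorProduct Nat commutatorElement

noncomputable section

/-! ### The exponential representation of the free group -/

section ExpSeries

variable {S T : Type*} [Ring S] [Algebra ℚ S] [Ring T] [Algebra ℚ T]

/-- The exponential series `exp (x t) ∈ S⟦t⟧` of an element `x` of a `ℚ`-algebra `S`, which need
not be commutative. -/
def expSeries (x : S) : S⟦X⟧ :=
  PowerSeries.mk fun n => (n ! : ℚ)⁻¹ • x ^ n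

@[simp]
theorem coeff_expSeries (x : S) (n : ℕ) :
    PowerSeries.coeff n (expSeries x) = (n ! : ℚ)⁻¹ • x ^ n :=
  PowerSeries.coeff_mk ..

theorem expSeries_zero : expSeries (0 : S) = 1 := by
  ext n
  cases n <;> simp [PowerSeries.coeff_one]

theorem map_expSeries (f : S →ₐ[ℚ] T) (x : S) :
    PowerSeries.map f.toRingHom (expSeries x) = expSeries (f x) := by
  ext n
  simp

theorem expSeries_add_of_commute {x y : S} (h : Commute x y) :
    expSeries (x + y) = expSeries x * expSeries y := by
  ext n
  rw [PowerSeries.coeff_mul, coeff_expSeries, h.add_pow', Finset.smul_sum]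
  refine Finset.sum_congr rfl fun p hp => ?_
  obtain rfl := Finset.HasAntidiagonal.mem_antidiagonal.mp hp
  have inv_factorial_mul_choose : ((p.1 + p.2)! : ℚ)⁻¹ * (p.1 + p.2).choose p.1 =
      (p.1 ! : ℚ)⁻¹ * (p.2 ! : ℚ)⁻¹ := by
    rw [Nat.cast_add_choose]
    field_simp
  rw [coeff_expSeries, coeff_expSeries, smul_mul_smul_comm, ← Nat.cast_smul_eq_nsmul ℚ, smul_smul,
    inv_factorial_mul_choose]

theorem expSeries_of_mul_self_eq_zero {x : S} (h : x * x = 0) :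
    expSeries x = 1 + PowerSeries.C x * PowerSeries.X := by
  ext n
  match n with
  | 0 => simp
  | 1 => simp [PowerSeries.coeff_one]
  | n + 2 => simp [pow_add, pow_two, h, PowerSeries.coeff_one]

/-- The one-parameter group `r ↦ exp (r x t)`. -/
def expSeriesHom (x : S) : Multiplicative ℚ →* S⟦X⟧ where
  toFun r := expSeries (r.toAdd • x)
  map_one' := by rw [toAdd_one, zero_smul, expSeries_zero]
  map_mul' r s := by
    rw [toAdd_mul, add_smul, expSeries_add_of_commute]
    exact ((Commute.refl x).smul_left _).smul_right _

theorem expSeriesHom_apply (x : S) (r : Multiplicative ℚ) :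
    expSeriesHom x r = expSeries (r.toAdd • x) := rfl

end ExpSeries

variable {ι : Type*}

/-- The Magnus-type representation of the free group on `ι` in the units of the power series over
the free algebra, with the generator `i` acting as `exp (xᵢ t)`. The extra variable `t` records the
degree in the `xᵢ`, so power series in `t` replace the completion of the free algebra. -/
def magnusExp : FreeGroup ι →* (FreeAlgebra ℚ ι)⟦X⟧ :=
  (Units.coeHom _).comp <| FreeGroup.lift fun i =>
    (expSeriesHom (FreeAlgebra.ι ℚ i)).toHomUnits (Multiplicative.ofAdd 1)

@[simp]
theorem magnusExp_of (i : ι) : magnusExp (.of i) = expSeries (FreeAlgebra.ι ℚ i) := by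
  simp [magnusExp, expSeriesHom_apply]

theorem magnusExp_of_zpow (i : ι) (n : ℤ) :
    magnusExp (.of i ^ n) = expSeries ((n : ℚ) • FreeAlgebra.ι ℚ i) := by
  rw [magnusExp, MonoidHom.comp_apply, map_zpow, FreeGroup.lift_apply_of, ← map_zpow, ← ofAdd_zsmul,
    Units.coeHom_apply, MonoidHom.coe_toHomUnits, expSeriesHom_apply, toAdd_ofAdd, zsmul_one]

@[simp]
theorem magnusExp_of_inv (i : ι) :
    magnusExp (.of i)⁻¹ = expSeries (-FreeAlgebra.ι ℚ i) := by
  simpa using magnusExp_of_zpow i (-1)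

@[simp]
theorem constantCoeff_magnusExp (g : FreeGroup ι) :
    PowerSeries.constantCoeff (magnusExp g) = 1 := by
  have h : (PowerSeries.constantCoeff : (FreeAlgebra ℚ ι)⟦X⟧ →+* _).toMonoidHom.comp
      magnusExp = 1 :=
    FreeGroup.ext_hom _ _ fun i => by
      simp [← PowerSeries.coeff_zero_eq_constantCoeff_apply]
  exact DFunLike.congr_fun h g

/-- The augmentation of the free algebra, which kills the generators, applied to the coefficients of
a power series. -/
def augmentation : (FreeAlgebra ℚ ι)⟦X⟧ →+* ℚ⟦X⟧ :=
  PowerSeries.map (FreeAlgebra.algebraMapInv : FreeAlgebra ℚ ι →ₐ[ℚ] ℚ).toRingHom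

theorem augmentation_magnusExp (g : FreeGroup ι) : augmentation (magnusExp g) = 1 := by
  have h : augmentation.toMonoidHom.comp (magnusExp (ι := ι)) = 1 :=
    FreeGroup.ext_hom _ _ fun i => by
      simpa [augmentation, FreeAlgebra.algebraMapInv, expSeries_zero] using
        map_expSeries FreeAlgebra.algebraMapInv (FreeAlgebra.ι ℚ i)
  exact DFunLike.congr_fun h g

/-- The endomorphism of the free algebra multiplying every generator by `r`; it acts as `r ^ n` on
the homogeneous elements of degree `n`. -/
def scaleGenerators (r : ℚ) : FreeAlgebra ℚ ι →ₐ[ℚ] FreeAlgebra ℚ ι :=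
  FreeAlgebra.lift ℚ fun i => r • FreeAlgebra.ι ℚ i

@[simp]
theorem scaleGenerators_ι (r : ℚ) (i : ι) :
    scaleGenerators r (FreeAlgebra.ι ℚ i) = r • FreeAlgebra.ι ℚ i :=
  FreeAlgebra.lift_ι_apply ..

theorem scaleGenerators_coeff_magnusExp (r : ℚ) (g : FreeGroup ι) (n : ℕ) :
    scaleGenerators r (PowerSeries.coeff n (magnusExp g)) =
      r ^ n • PowerSeries.coeff n (magnusExp g) := by
  induction g using FreeGroup.induction_on generalizing n with
  | C1 => cases n <;> simp [PowerSeries.coeff_one]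
  | of i => simp [smul_pow, smul_comm (r ^ n)]
  | inv_of i _ =>
    simp [← smul_neg, smul_pow, smul_comm (r ^ n)]
  | mul x y hx hy =>
    rw [map_mul, PowerSeries.coeff_mul, map_sum, Finset.smul_sum]
    refine Finset.sum_congr rfl fun p hp => ?_
    rw [map_mul, hx, hy, smul_mul_smul_comm, ← pow_add,
      Finset.HasAntidiagonal.mem_antidiagonal.mp hp]

/-! ### Faithfulness of the representation -/

theorem exists_syllables (g : FreeGroup ι) :
    ∃ l : List (ι × ℤ), (∀ p ∈ l, p.2 ≠ 0) ∧ (l.map Prod.fst).IsChain (· ≠ ·) ∧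
      (l.map fun p => FreeGroup.of p.1 ^ p.2).prod = g := by
  classical
  obtain ⟨x, rfl⟩ := (freeGroupEquivCoprodI (ι := ι)).symm.surjective g
  obtain ⟨w, rfl⟩ :=
    (Monoid.CoprodI.Word.equiv (M := fun _ : ι => FreeGroup Unit)).symm.surjective x
  let exponent : FreeGroup Unit → ℤ := FreeGroup.freeGroupUnitEquivInt
  have of_unit_zpow_exponent (m : FreeGroup Unit) : FreeGroup.of () ^ exponent m = m :=
    FreeGroup.freeGroupUnitEquivInt.symm_apply_apply m
  refine ⟨w.toList.map fun p => (p.1, exponent p.2), ?_, ?_, ?_⟩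
  · simp only [List.forall_mem_map]
    intro p hp h0
    exact w.ne_one p hp (by rw [← of_unit_zpow_exponent p.2, h0, zpow_zero])
  · rw [List.map_map, List.isChain_map]
    exact w.chain_ne
  · change _ = freeGroupEquivCoprodI.symm w.prod
    rw [Monoid.CoprodI.Word.prod, map_list_prod, List.map_map, List.map_map]
    congr 1
    refine List.map_congr_left fun p _ => ?_
    simp only [Function.comp_apply]
    conv_rhs => rw [← of_unit_zpow_exponent p.2]
    simp

section LinearFactors

variable {S : Type*} [Ring S]

theorem coeff_one_add_C_mul_X_mul_succ (a : S) (f : S⟦X⟧) (n : ℕ) :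
    PowerSeries.coeff (n + 1) ((1 + PowerSeries.C a * PowerSeries.X) * f) =
      PowerSeries.coeff (n + 1) f + a * PowerSeries.coeff n f := by
  rw [add_mul, one_mul, map_add, mul_assoc, PowerSeries.coeff_C_mul, PowerSeries.coeff_succ_X_mul]

theorem coeff_prod_one_add_C_mul_X_of_length_lt (l : List S) {n : ℕ} (hn : l.length < n) :
    PowerSeries.coeff n (l.map fun a => 1 + PowerSeries.C a * PowerSeries.X).prod = 0 := by
  induction l generalizing n with
  | nil =>
    simp only [List.length_nil] at hn
    simp [PowerSeries.coeff_one, hn.ne']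
  | cons a l ih =>
    obtain ⟨n, rfl⟩ := Nat.exists_eq_add_one_of_ne_zero (Nat.ne_zero_of_lt hn)
    rw [List.length_cons, Nat.succ_lt_succ_iff] at hn
    rw [List.map_cons, List.prod_cons, coeff_one_add_C_mul_X_mul_succ, ih hn,
      ih (hn.trans n.lt_succ_self), mul_zero, add_zero]

theorem coeff_length_prod_one_add_C_mul_X (l : List S) :
    PowerSeries.coeff l.length (l.map fun a => 1 + PowerSeries.C a * PowerSeries.X).prod =
      l.prod := by
  induction l with
  | nil => simp
  | cons a l ih =>
    rw [List.map_cons, List.prod_cons, List.length_cons, coeff_one_add_C_mul_X_mul_succ, ih,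
      coeff_prod_one_add_C_mul_X_of_length_lt l l.length.lt_succ_self, zero_add, List.prod_cons]

end LinearFactors

open scoped Classical in
/-- The operator on the vector space with basis the lists in `ι` that puts the letter `i` in front
of a list, or kills the list if it already begins with `i`. -/
def consOrKill (i : ι) : Module.End ℚ (List ι →₀ ℚ) :=
  Finsupp.linearCombination ℚ fun v => if v.head? = some i then 0 else .single (i :: v) 1

theorem consOrKill_single_of_ne {i : ι} {v : List ι} (h : v.head? ≠ some i) :
    consOrKill i (.single v 1) = .single (i :: v) 1 := by
  simp [consOrKill, h]

theorem consOrKill_mul_self (i : ι) : consOrKill i * consOrKill i = 0 := by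
  refine Finsupp.lhom_ext' fun v => LinearMap.ext_ring ?_
  by_cases h : v.head? = some i <;> simp [consOrKill, h]

theorem prod_smul_consOrKill_single_nil {α : Type*} (r : α → ℚ) (i : α → ι) {l : List α}
    (hl : (l.map i).IsChain (· ≠ ·)) :
    (l.map fun p => r p • consOrKill (i p)).prod (.single [] 1) =
      .single (l.map i) (l.map r).prod := by
  induction l with
  | nil => simp
  | cons p l ih =>
    have head_ne : (l.map i).head? ≠ some (i p) := by
      cases l with
      | nil => simp
      | cons q l => simpa [eq_comm] using (List.isChain_cons_cons.mp hl).1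
    rw [List.map_cons, List.prod_cons, Module.End.mul_apply, ih hl.tail, ← mul_one (l.map r).prod,
      ← smul_eq_mul, ← Finsupp.smul_single, LinearMap.smul_apply, map_smul,
      consOrKill_single_of_ne head_ne]
    simp

theorem magnusExp_injective : Function.Injective (magnusExp : FreeGroup ι →* _) := by
  rw [injective_iff_map_eq_one]
  intro g hg
  obtain ⟨l, hne, hchain, rfl⟩ := exists_syllables g
  let ρ : FreeAlgebra ℚ ι →ₐ[ℚ] Module.End ℚ (List ι →₀ ℚ) := FreeAlgebra.lift ℚ consOrKill
  let factors : List (Module.End ℚ (List ι →₀ ℚ)) := l.map fun p => (p.2 : ℚ) • consOrKill p.1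
  have map_syllable (p : ι × ℤ) : PowerSeries.map ρ.toRingHom
      (magnusExp (.of p.1 ^ p.2)) =
      1 + PowerSeries.C ((p.2 : ℚ) • consOrKill p.1) * PowerSeries.X := by
    rw [magnusExp_of_zpow, map_expSeries, map_smul, FreeAlgebra.lift_ι_apply,
      expSeries_of_mul_self_eq_zero]
    rw [smul_mul_smul_comm, consOrKill_mul_self, smul_zero]
  have prod_syllables : (factors.map fun a => 1 + PowerSeries.C a * PowerSeries.X).prod = 1 := by
    have h := congrArg (PowerSeries.map ρ.toRingHom) hg
    rw [map_list_prod, map_list_prod, map_one, List.map_map, List.map_map] at h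
    simpa only [factors, List.map_map, Function.comp_def, map_syllable] using h
  have factors_ne_zero : factors.prod ≠ 0 := by
    intro h
    have h0 := DFunLike.congr_fun h (.single [] 1)
    rw [prod_smul_consOrKill_single_nil _ _ hchain, LinearMap.zero_apply, Finsupp.single_eq_zero,
      List.prod_eq_zero_iff, List.mem_map] at h0
    obtain ⟨p, hp, hp0⟩ := h0
    exact hne p hp (Int.cast_eq_zero.mp hp0)
  have length_eq_zero : l.length = 0 := by
    by_contra h
    refine factors_ne_zero ?_
    rw [← coeff_length_prod_one_add_C_mul_X, prod_syllables, List.length_map,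
      PowerSeries.coeff_one, if_neg h]
  simp [List.length_eq_zero_iff.mp length_eq_zero]

/-! ### Lowest terms are Lie elements -/

theorem commute_map_map_of_commute {R S T : Type*} [Semiring R] [Semiring S] [Semiring T]
    {f : R →+* T} {g : S →+* T} (h : ∀ a b, Commute (f a) (g b)) (p : R⟦X⟧) (q : S⟦X⟧) :
    Commute (PowerSeries.map f p) (PowerSeries.map g q) := by
  ext n
  rw [PowerSeries.coeff_mul, PowerSeries.coeff_mul, ← Finset.Nat.sum_antidiagonal_swap]
  refine Finset.sum_congr rfl fun a _ => ?_
  simpa only [PowerSeries.coeff_map] using! (h _ _).eq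

/-- The coproduct of the free algebra, seen as the enveloping algebra of the free Lie algebra. -/
def shuffleComul : FreeAlgebra ℚ ι →ₐ[ℚ] FreeAlgebra ℚ ι ⊗[ℚ] FreeAlgebra ℚ ι :=
  FreeAlgebra.lift ℚ fun i => FreeAlgebra.ι ℚ i ⊗ₜ 1 + 1 ⊗ₜ FreeAlgebra.ι ℚ i

/-- Primitive elements for the coproduct `shuffleComul`. -/
def IsLiePrimitive (f : FreeAlgebra ℚ ι) : Prop :=
  shuffleComul f = f ⊗ₜ 1 + 1 ⊗ₜ f

theorem isLiePrimitive_ι (i : ι) : IsLiePrimitive (FreeAlgebra.ι ℚ i) :=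
  FreeAlgebra.lift_ι_apply ..

theorem IsLiePrimitive.neg {f : FreeAlgebra ℚ ι} (hf : IsLiePrimitive f) : IsLiePrimitive (-f) := by
  rw [IsLiePrimitive, map_neg, hf, neg_add, TensorProduct.neg_tmul, TensorProduct.tmul_neg]

open Algebra.TensorProduct in
theorem map_shuffleComul_expSeries {f : FreeAlgebra ℚ ι} (hf : IsLiePrimitive f) :
    PowerSeries.map shuffleComul.toRingHom (expSeries f) =
      PowerSeries.map (includeLeft (S := ℚ)).toRingHom (expSeries f) *
        PowerSeries.map includeRight.toRingHom (expSeries f) := by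
  rw [map_expSeries, map_expSeries, map_expSeries, hf]
  exact expSeries_add_of_commute (by simp [Commute, SemiconjBy])

open Algebra.TensorProduct in
theorem map_shuffleComul_magnusExp (g : FreeGroup ι) :
    PowerSeries.map shuffleComul.toRingHom (magnusExp g) =
      PowerSeries.map (includeLeft (S := ℚ)).toRingHom (magnusExp g) *
        PowerSeries.map includeRight.toRingHom (magnusExp g) := by
  induction g using FreeGroup.induction_on with
  | C1 => simp
  | of i => rw [magnusExp_of, map_shuffleComul_expSeries (isLiePrimitive_ι i)]
  | inv_of i _ => rw [magnusExp_of_inv, map_shuffleComul_expSeries (isLiePrimitive_ι i).neg]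
  | mul x y hx hy =>
    have h := commute_map_map_of_commute (f := (includeLeft (R := ℚ) (S := ℚ)).toRingHom)
      (g := (includeRight (R := ℚ)).toRingHom) (fun a b => by simp [Commute, SemiconjBy])
      (magnusExp y) (magnusExp x)
    rw [map_mul, map_mul, hx, hy, map_mul, map_mul]
    exact h.symm.mul_mul_mul_comm _ _

theorem one_le_order_magnusExp_sub_one (g : FreeGroup ι) : 1 ≤ (magnusExp g - 1).order := by
  rw [PowerSeries.one_le_order_iff_constCoeff_eq_zero, map_sub, constantCoeff_magnusExp, map_one,
    sub_self]

open Algebra.TensorProduct in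
theorem isLiePrimitive_coeff_magnusExp_sub_one {g : FreeGroup ι} {n : ℕ}
    (hn : n ≤ (magnusExp g - 1).order) :
    IsLiePrimitive (PowerSeries.coeff n (magnusExp g - 1)) := by
  set f := magnusExp g - 1 with hf
  set L := PowerSeries.map (includeLeft (R := ℚ) (S := ℚ) (A := FreeAlgebra ℚ ι)
    (B := FreeAlgebra ℚ ι)).toRingHom
  set R := PowerSeries.map (includeRight (R := ℚ) (A := FreeAlgebra ℚ ι)
    (B := FreeAlgebra ℚ ι)).toRingHom
  have comul_eq : PowerSeries.map shuffleComul.toRingHom f = L f + R f + L f * R f := by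
    have h : PowerSeries.map shuffleComul.toRingHom (magnusExp g) =
        L (magnusExp g) * R (magnusExp g) :=
      map_shuffleComul_magnusExp g
    simp only [hf, map_sub, map_one, h, sub_mul, mul_sub, one_mul, mul_one]
    abel
  have lt_order_mul : n < (L f * R f).order := by
    have h : (n : ℕ∞) + 1 ≤ f.order + f.order :=
      add_le_add hn (one_le_order_magnusExp_sub_one g)
    refine ((ENat.add_one_le_iff (ENat.natCast_ne_top n)).mp h).trans_le ?_
    exact (add_le_add (PowerSeries.le_order_map _) (PowerSeries.le_order_map _)).trans
      (PowerSeries.le_order_mul _ _)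
  have h := congrArg (PowerSeries.coeff n) comul_eq
  rw [map_add, map_add, PowerSeries.coeff_of_lt_order n lt_order_mul, add_zero] at h
  exact h

/-! ### Symbols and the Poincaré–Birkhoff–Witt filtration -/

theorem totalDegree_derivation_le {σ R : Type*} [CommSemiring R]
    (d : Derivation R (MvPolynomial σ R) (MvPolynomial σ R)) {k : ℕ}
    (hd : ∀ i, (d (.X i)).totalDegree ≤ k) (f : MvPolynomial σ R) :
    (d f).totalDegree ≤ f.totalDegree - 1 + k := by
  have d_eq : d = MvPolynomial.mkDerivation R fun i => d (.X i) :=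
    MvPolynomial.derivation_ext fun i => by
      rw [MvPolynomial.mkDerivation_X]
  conv_lhs => rw [f.as_sum, map_sum, d_eq]
  refine MvPolynomial.totalDegree_finsetSum_le fun s hs => ?_
  rw [MvPolynomial.mkDerivation_monomial]
  refine (MvPolynomial.totalDegree_smul_le _ _).trans ?_
  refine MvPolynomial.totalDegree_finsetSum_le fun i hi => ?_
  refine (MvPolynomial.totalDegree_mul _ _).trans (Nat.add_le_add ?_ (hd i))
  refine (MvPolynomial.totalDegree_monomial_le _ _).trans ?_
  have degree_eq : (s - Finsupp.single i 1).degree + 1 = s.degree := by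
    have hle : Finsupp.single i 1 ≤ s :=
      Finsupp.single_le_iff.mpr (Nat.one_le_iff_ne_zero.mpr (Finsupp.mem_support_iff.mp hi))
    conv_rhs => rw [← tsub_add_cancel_of_le hle]
    simp
  have degree_le : s.degree ≤ f.totalDegree := MvPolynomial.le_totalDegree hs
  change (s - Finsupp.single i 1).degree ≤ _
  lia

theorem derivation_eq_zero_of_totalDegree_eq_zero {σ R : Type*} [CommSemiring R]
    (d : Derivation R (MvPolynomial σ R) (MvPolynomial σ R)) {f : MvPolynomial σ R}
    (hf : f.totalDegree = 0) : d f = 0 := by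
  rw [MvPolynomial.totalDegree_eq_zero_iff_eq_C.mp hf, MvPolynomial.derivation_C]

theorem freeAlgebra_induction_left {motive : FreeAlgebra ℚ ι → Prop} (one : motive 1)
    (add : ∀ f g, motive f → motive g → motive (f + g))
    (smul : ∀ (r : ℚ) f, motive f → motive (r • f))
    (ι_mul : ∀ i f, motive f → motive (FreeAlgebra.ι ℚ i * f)) (f : FreeAlgebra ℚ ι) :
    motive f := by
  suffices h : ∀ g, motive g → motive (f * g) by simpa using h 1 one
  induction f with
  | grade0 r => exact fun g hg => by simpa [← Algebra.smul_def] using smul r g hg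
  | grade1 i => exact ι_mul i
  | mul a b ha hb => exact fun g hg => by simpa only [mul_assoc] using ha _ (hb g hg)
  | add a b ha hb => exact fun g hg => by simpa only [add_mul] using add _ _ (ha g hg) (hb g hg)

/-- Polynomials in the formal derivatives `X w` (`w` a word in the letters `i`) of one universal
function `S` under noncommuting derivations `∂ᵢ`; in particular `X 1` is `S` itself. -/
abbrev DiffPoly (ι : Type*) := MvPolynomial (FreeMonoid ι) ℚ

/-- The derivation `∂ᵢ`. -/
def diffX (i : ι) : Derivation ℚ (DiffPoly ι) (DiffPoly ι) :=
  MvPolynomial.mkDerivation ℚ fun w => .X (.of i * w)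

@[simp]
theorem diffX_X (i : ι) (w : FreeMonoid ι) : diffX i (.X w) = .X (.of i * w) :=
  MvPolynomial.mkDerivation_X ..

/-- The generator `i` acting as `∂ᵢ`. -/
def diffAction : FreeAlgebra ℚ ι →ₐ[ℚ] Module.End ℚ (DiffPoly ι) :=
  FreeAlgebra.lift ℚ fun i => (diffX i : DiffPoly ι →ₗ[ℚ] DiffPoly ι)

/-- The generator `i` acting as `e⁻ˢ ∂ᵢ eˢ = ∂ᵢ + ∂ᵢS`. -/
def twistedAction : FreeAlgebra ℚ ι →ₐ[ℚ] Module.End ℚ (DiffPoly ι) :=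
  FreeAlgebra.lift ℚ fun i =>
    (diffX i : DiffPoly ι →ₗ[ℚ] DiffPoly ι) + LinearMap.mulLeft ℚ (.X (.of i))

@[simp]
theorem diffAction_ι (i : ι) (c : DiffPoly ι) : diffAction (FreeAlgebra.ι ℚ i) c = diffX i c := by
  simp [diffAction]

@[simp]
theorem twistedAction_ι (i : ι) (c : DiffPoly ι) :
    twistedAction (FreeAlgebra.ι ℚ i) c = diffX i c + .X (.of i) * c := by
  simp [twistedAction]

/-- The symbol `e⁻ˢ f(∂) eˢ` of a differential operator `f`. Its degree is the order of `f` in the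
Poincaré–Birkhoff–Witt filtration. -/
def symbol : FreeAlgebra ℚ ι →ₗ[ℚ] DiffPoly ι :=
  LinearMap.applyₗ 1 ∘ₗ twistedAction.toLinearMap

theorem symbol_apply (f : FreeAlgebra ℚ ι) : symbol f = twistedAction f 1 := rfl

@[simp]
theorem symbol_one : symbol (1 : FreeAlgebra ℚ ι) = 1 := by
  simp [symbol_apply]

theorem symbol_ι_mul (i : ι) (f : FreeAlgebra ℚ ι) :
    symbol (FreeAlgebra.ι ℚ i * f) = diffX i (symbol f) + .X (.of i) * symbol f := by
  rw [symbol_apply, map_mul, Module.End.mul_apply, twistedAction_ι, symbol_apply]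

/-- The derivative in the direction of the variation `S ↦ S + c` of the universal function. -/
def variation (c : DiffPoly ι) : Derivation ℚ (DiffPoly ι) (DiffPoly ι) :=
  MvPolynomial.mkDerivation ℚ fun w => diffAction (FreeMonoid.lift (FreeAlgebra.ι ℚ) w) c

theorem variation_X (c : DiffPoly ι) (w : FreeMonoid ι) :
    variation c (.X w) = diffAction (FreeMonoid.lift (FreeAlgebra.ι ℚ) w) c :=
  MvPolynomial.mkDerivation_X ..

theorem diffX_variation (i : ι) (c f : DiffPoly ι) :
    diffX i (variation c f) = variation c (diffX i f) := by
  have h : ⁅diffX i, variation c⁆ = 0 := MvPolynomial.derivation_ext fun w => by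
    simp [Derivation.commutator_apply, variation_X]
  rw [← sub_eq_zero, ← Derivation.commutator_apply, h, Derivation.zero_apply]

theorem twistedAction_apply (f : FreeAlgebra ℚ ι) (c : DiffPoly ι) :
    twistedAction f c = c * symbol f + variation c (symbol f) := by
  induction f using freeAlgebra_induction_left with
  | one => simp
  | add f g hf hg =>
    rw [map_add, LinearMap.add_apply, hf, hg, map_add, map_add]
    ring
  | smul r f hf =>
    rw [map_smul, LinearMap.smul_apply, hf, map_smul, Derivation.map_smul, smul_add,
      mul_smul_comm]
  | ι_mul i f hf =>
    have variation_X_of : variation c (.X (.of i)) = diffX i c := by simp [variation_X]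
    rw [map_mul, Module.End.mul_apply, hf, twistedAction_ι, symbol_ι_mul]
    simp only [map_add, Derivation.leibniz, smul_eq_mul, variation_X_of, diffX_variation]
    ring

theorem symbol_mul (f g : FreeAlgebra ℚ ι) :
    symbol (f * g) = symbol g * symbol f + variation (symbol g) (symbol f) := by
  rw [← twistedAction_apply, symbol_apply, map_mul, Module.End.mul_apply, symbol_apply]

theorem totalDegree_diffX_le (i : ι) (f : DiffPoly ι) :
    (diffX i f).totalDegree ≤ f.totalDegree := by
  obtain h | h := eq_or_ne f.totalDegree 0
  · rw [derivation_eq_zero_of_totalDegree_eq_zero _ h, MvPolynomial.totalDegree_zero]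
    exact Nat.zero_le _
  · have := totalDegree_derivation_le (diffX i) (k := 1) (fun w => by simp) f
    lia

theorem totalDegree_variation_le (c f : DiffPoly ι) :
    (variation c f).totalDegree ≤ f.totalDegree - 1 + c.totalDegree := by
  refine totalDegree_derivation_le _ (fun w => ?_) f
  rw [variation_X]
  induction w using FreeMonoid.inductionOn' with
  | one => simp
  | of_mul i w ih =>
    rw [map_mul, FreeMonoid.lift_eval_of, map_mul, Module.End.mul_apply, diffAction_ι]
    exact (totalDegree_diffX_le i _).trans ih

theorem totalDegree_symbol_mul {f g : FreeAlgebra ℚ ι} (hf : symbol f ≠ 0) (hg : symbol g ≠ 0) :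
    (symbol (f * g)).totalDegree = (symbol f).totalDegree + (symbol g).totalDegree := by
  have hmul := MvPolynomial.totalDegree_mul_of_isDomain hg hf
  rw [symbol_mul]
  obtain h | h := eq_or_ne (symbol f).totalDegree 0
  · rw [derivation_eq_zero_of_totalDegree_eq_zero _ h, add_zero, hmul, add_comm]
  · have := totalDegree_variation_le (symbol g) (symbol f)
    rw [MvPolynomial.totalDegree_add_eq_left_of_totalDegree_lt (by lia), hmul, add_comm]

/-- The truncation of a differential polynomial to degree one. -/
def linearTruncation : DiffPoly ι →ₐ[ℚ] TrivSqZeroExt ℚ (MonoidAlgebra ℚ (FreeMonoid ι)) :=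
  MvPolynomial.aeval fun w => .inr (.of ℚ (FreeMonoid ι) w)

theorem linearTruncation_X (w : FreeMonoid ι) :
    linearTruncation (.X w) = .inr (.of ℚ (FreeMonoid ι) w) :=
  MvPolynomial.aeval_X ..

theorem linearTruncation_diffX (i : ι) (c : DiffPoly ι) :
    linearTruncation (diffX i c) =
      .inr (.of ℚ (FreeMonoid ι) (.of i) * (linearTruncation c).snd) := by
  induction c using MvPolynomial.induction_on with
  | C a => simp [← MvPolynomial.algebraMap_eq, TrivSqZeroExt.algebraMap_eq_inl]
  | add p q hp hq => simp only [map_add, hp, hq, TrivSqZeroExt.snd_add, mul_add,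
      TrivSqZeroExt.inr_add]
  | mul_X p w hp =>
    rw [Derivation.leibniz, diffX_X, map_add, smul_eq_mul, smul_eq_mul, map_mul, map_mul, map_mul,
      hp, linearTruncation_X, linearTruncation_X]
    ext
    · simp
    · simp

theorem snd_add_fst_linearTruncation_symbol (f : FreeAlgebra ℚ ι) :
    (linearTruncation (symbol f)).snd + algebraMap ℚ _ (linearTruncation (symbol f)).fst =
      FreeAlgebra.equivMonoidAlgebraFreeMonoid f := by
  induction f using freeAlgebra_induction_left with
  | one => simp [MonoidAlgebra.one_def]
  | add f g hf hg =>
    simp only [map_add, ← hf, ← hg, TrivSqZeroExt.snd_add, TrivSqZeroExt.fst_add]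
    abel
  | smul r f hf =>
    rw [map_smul, map_smul, map_smul, ← hf, TrivSqZeroExt.snd_smul, TrivSqZeroExt.fst_smul,
      smul_add, smul_eq_mul, map_mul, Algebra.smul_def r (algebraMap _ _ _)]
  | ι_mul i f hf =>
    rw [symbol_ι_mul, map_add, map_mul, linearTruncation_diffX, linearTruncation_X, map_mul, ← hf,
      mul_add]
    simp [FreeAlgebra.equivMonoidAlgebraFreeMonoid, Algebra.algebraMap_eq_smul_one]

theorem symbol_injective : Function.Injective (symbol : FreeAlgebra ℚ ι →ₗ[ℚ] DiffPoly ι) := by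
  intro f g h
  apply FreeAlgebra.equivMonoidAlgebraFreeMonoid.injective
  rw [← snd_add_fst_linearTruncation_symbol, h, snd_add_fst_linearTruncation_symbol]

theorem exists_eq_algebraMap_of_totalDegree_symbol_eq_zero {f : FreeAlgebra ℚ ι}
    (hf : (symbol f).totalDegree = 0) : ∃ r : ℚ, f = algebraMap ℚ _ r := by
  refine ⟨(symbol f).coeff 0, symbol_injective ?_⟩
  rw [Algebra.algebraMap_eq_smul_one, map_smul, symbol_one, ← Algebra.algebraMap_eq_smul_one,
    MvPolynomial.algebraMap_eq]
  exact MvPolynomial.totalDegree_eq_zero_iff_eq_C.mp hf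

section Scaling

variable {σ R : Type*} [CommSemiring R]

/-- Multiplication of all variables by `r`. -/
def scaleVariables (r : R) : MvPolynomial σ R →ₐ[R] MvPolynomial σ R :=
  MvPolynomial.aeval fun i => MvPolynomial.C r * .X i

theorem scaleVariables_X (r : R) (i : σ) :
    scaleVariables r (.X i : MvPolynomial σ R) = MvPolynomial.C r * .X i :=
  MvPolynomial.aeval_X ..

theorem coeff_scaleVariables (r : R) (p : MvPolynomial σ R) (s : σ →₀ ℕ) :
    (scaleVariables r p).coeff s = r ^ s.degree * p.coeff s := by
  classical
  induction p using MvPolynomial.induction_on' with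
  | monomial t a =>
    have h : scaleVariables r (MvPolynomial.monomial t a) =
        MvPolynomial.monomial t (r ^ t.degree * a) := by
      rw [scaleVariables, MvPolynomial.aeval_monomial, MvPolynomial.algebraMap_eq,
        Finsupp.prod]
      simp only [mul_pow, Finset.prod_mul_distrib, Finset.prod_pow_eq_pow_sum]
      rw [MvPolynomial.monomial_eq, Finsupp.prod, Finsupp.degree_apply, map_mul, map_pow]
      ring
    rw [h, MvPolynomial.coeff_monomial, MvPolynomial.coeff_monomial]
    split_ifs with hts
    · rw [hts]
    · rw [mul_zero]
  | add p q hp hq => rw [map_add, MvPolynomial.coeff_add, hp, hq, MvPolynomial.coeff_add, mul_add]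

end Scaling

theorem scaleVariables_diffX (r : ℚ) (i : ι) (c : DiffPoly ι) :
    scaleVariables r (diffX i c) = diffX i (scaleVariables r c) := by
  induction c using MvPolynomial.induction_on with
  | C a => simp [← MvPolynomial.algebraMap_eq]
  | add p q hp hq => simp only [map_add, hp, hq]
  | mul_X p w hp =>
    simp only [Derivation.leibniz, map_add, smul_eq_mul, map_mul, hp, diffX_X, scaleVariables_X,
      MvPolynomial.derivation_C, mul_zero, add_zero]

theorem scaleVariables_two_symbol (f : FreeAlgebra ℚ ι) :
    scaleVariables 2 (symbol f) =
      LinearMap.mul' ℚ (DiffPoly ι) (TensorProduct.map symbol symbol (shuffleComul f)) := by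
  induction f using freeAlgebra_induction_left with
  | one => simp [Algebra.TensorProduct.one_def]
  | add f g hf hg => simp only [map_add, hf, hg]
  | smul r f hf => simp only [map_smul, hf]
  | ι_mul i f hf =>
    have symbol_ι_mul_tensor (t : FreeAlgebra ℚ ι ⊗[ℚ] FreeAlgebra ℚ ι) :
        LinearMap.mul' ℚ (DiffPoly ι) (TensorProduct.map symbol symbol
          ((FreeAlgebra.ι ℚ i ⊗ₜ 1 + 1 ⊗ₜ FreeAlgebra.ι ℚ i) * t)) =
        diffX i (LinearMap.mul' ℚ _ (TensorProduct.map symbol symbol t)) +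
          MvPolynomial.C 2 * .X (.of i) *
            LinearMap.mul' ℚ _ (TensorProduct.map symbol symbol t) := by
      induction t with
      | zero => simp
      | add s t hs ht =>
        simp only [mul_add, map_add, hs, ht]
        ring
      | tmul u v =>
        simp only [add_mul, Algebra.TensorProduct.tmul_mul_tmul, one_mul, map_add,
          TensorProduct.map_tmul, LinearMap.mul'_apply, symbol_ι_mul, Derivation.leibniz,
          smul_eq_mul, map_ofNat]
        ring
    rw [symbol_ι_mul, map_add, map_mul, scaleVariables_diffX, scaleVariables_X, hf, map_mul,
      isLiePrimitive_ι i, symbol_ι_mul_tensor]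

theorem totalDegree_symbol_le_one {f : FreeAlgebra ℚ ι} (hf : IsLiePrimitive f) :
    (symbol f).totalDegree ≤ 1 := by
  have scale_two : scaleVariables 2 (symbol f) = symbol f + symbol f := by
    rw [scaleVariables_two_symbol, hf]
    simp
  refine Finset.sup_le fun s hs => ?_
  have coeff_eq := congrArg (MvPolynomial.coeff s) scale_two
  rw [coeff_scaleVariables, MvPolynomial.coeff_add, ← two_mul] at coeff_eq
  have pow_eq : (2 : ℚ) ^ s.degree = 2 ^ 1 :=
    (mul_right_cancel₀ (MvPolynomial.mem_support_iff.mp hs) coeff_eq).trans (pow_one 2).symm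
  exact (pow_right_injective₀ two_pos (by norm_num) pow_eq).le

theorem exists_eq_algebraMap_of_isLiePrimitive_mul {u m : FreeAlgebra ℚ ι} (hum : u * m ≠ 0)
    (hm : FreeAlgebra.algebraMapInv m = 0) (h : IsLiePrimitive (u * m)) :
    ∃ r : ℚ, u = algebraMap ℚ _ r := by
  have symbol_ne_zero {f : FreeAlgebra ℚ ι} : f ≠ 0 → symbol f ≠ 0 :=
    (map_ne_zero_iff _ symbol_injective).mpr
  have degree_le := totalDegree_symbol_le_one h
  rw [totalDegree_symbol_mul (symbol_ne_zero (left_ne_zero_of_mul hum))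
    (symbol_ne_zero (right_ne_zero_of_mul hum))] at degree_le
  have degree_m_ne_zero : (symbol m).totalDegree ≠ 0 := by
    intro h0
    obtain ⟨r, rfl⟩ := exists_eq_algebraMap_of_totalDegree_symbol_eq_zero h0
    rw [FreeAlgebra.algebraMap_leftInverse] at hm
    exact hum (by rw [hm, map_zero, mul_zero])
  exact exists_eq_algebraMap_of_totalDegree_symbol_eq_zero (by lia)

/-! ### Commutativity modulo a principal left ideal -/

theorem coeff_add_mul_of_le_order {R : Type*} [Semiring R] {p q : R⟦X⟧} {m n : ℕ}
    (hp : m ≤ p.order) (hq : n ≤ q.order) :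
    PowerSeries.coeff (m + n) (p * q) = PowerSeries.coeff m p * PowerSeries.coeff n q := by
  rw [PowerSeries.coeff_mul, Finset.sum_eq_single (m, n)]
  · rintro ⟨i, j⟩ hij hne
    rw [Finset.HasAntidiagonal.mem_antidiagonal] at hij
    rw [ne_eq, Prod.mk.injEq] at hne
    obtain hi | hj : i < m ∨ j < n := by lia
    · rw [PowerSeries.coeff_of_lt_order i ((Nat.cast_lt.mpr hi).trans_le hp), zero_mul]
    · rw [PowerSeries.coeff_of_lt_order j ((Nat.cast_lt.mpr hj).trans_le hq), mul_zero]
  · simp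

/-- The subgroup of the elements of the free group which `magnusExp` sends to `1` modulo the left
ideal `I`. -/
def congruenceSubgroup (I : Ideal (FreeAlgebra ℚ ι)⟦X⟧) : Subgroup (FreeGroup ι) where
  carrier := {g | magnusExp g - 1 ∈ I}
  one_mem' := by simp
  mul_mem' {x y} hx hy := by
    have h : magnusExp (x * y) - 1 = magnusExp x * (magnusExp y - 1) + (magnusExp x - 1) := by
      rw [map_mul]
      noncomm_ring
    rw [Set.mem_ofPred_eq, h]
    exact I.add_mem (I.mul_mem_left _ hy) hx
  inv_mem' {x} hx := by
    have h : magnusExp x⁻¹ - 1 = -(magnusExp x⁻¹ * (magnusExp x - 1)) := by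
      rw [mul_sub, ← map_mul, inv_mul_cancel, map_one, mul_one, neg_sub]
    rw [Set.mem_ofPred_eq, h]
    exact I.neg_mem (I.mul_mem_left _ hx)

theorem magnusExp_sub_one_ne_zero {g : FreeGroup ι} (hg : g ≠ 1) : magnusExp g - 1 ≠ 0 :=
  sub_ne_zero.mpr fun h => hg (magnusExp_injective (h.trans (map_one _).symm))

theorem scaleGenerators_coeff_magnusExp_sub_one (r : ℚ) (g : FreeGroup ι) {n : ℕ} (hn : n ≠ 0) :
    scaleGenerators r (PowerSeries.coeff n (magnusExp g - 1)) =
      r ^ n • PowerSeries.coeff n (magnusExp g - 1) := by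
  rw [map_sub, PowerSeries.coeff_one, if_neg hn, sub_zero, scaleGenerators_coeff_magnusExp]

-- The lowest coefficient of `magnusExp g - 1` is primitive, so it can be a left multiple of that of
-- `m` only by a scalar.
theorem scaleGenerators_coeff_order_of_mul_eq {m u : (FreeAlgebra ℚ ι)⟦X⟧}
    (hm : augmentation m = 0) {g : FreeGroup ι} (hg : g ≠ 1) (h : u * m = magnusExp g - 1) (r : ℚ) :
    scaleGenerators r (PowerSeries.coeff m.order.toNat m) =
      r ^ (magnusExp g - 1).order.toNat • PowerSeries.coeff m.order.toNat m := by
  have hum : u * m ≠ 0 := h ▸ magnusExp_sub_one_ne_zero hg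
  have hu := left_ne_zero_of_mul hum
  have hm0 := right_ne_zero_of_mul hum
  have order_eq : (magnusExp g - 1).order.toNat = u.order.toNat + m.order.toNat := by
    rw [← h, PowerSeries.order_mul, ENat.toNat_add (PowerSeries.order_eq_top.not.mpr hu)
      (PowerSeries.order_eq_top.not.mpr hm0)]
  have coeff_eq : PowerSeries.coeff (magnusExp g - 1).order.toNat (magnusExp g - 1) =
      PowerSeries.coeff u.order.toNat u * PowerSeries.coeff m.order.toNat m := by
    rw [order_eq, ← h, coeff_add_mul_of_le_order (ENat.natCast_toNat_le_self _)
      (ENat.natCast_toNat_le_self _)]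
  have order_ne_zero : (magnusExp g - 1).order.toNat ≠ 0 := by
    have h1 := one_le_order_magnusExp_sub_one g
    rw [← PowerSeries.coe_toNat_order (magnusExp_sub_one_ne_zero hg)] at h1
    exact Nat.one_le_iff_ne_zero.mp (by exact_mod_cast h1)
  have hu' := PowerSeries.coeff_order hu
  obtain ⟨c, hc⟩ := exists_eq_algebraMap_of_isLiePrimitive_mul
    (mul_ne_zero hu' (PowerSeries.coeff_order hm0))
    (by simpa [augmentation] using congrArg (PowerSeries.coeff m.order.toNat) hm)
    (coeff_eq ▸ isLiePrimitive_coeff_magnusExp_sub_one (ENat.natCast_toNat_le_self _))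
  have hc0 : c ≠ 0 := by
    rintro rfl
    exact hu' (by rw [hc, map_zero])
  have scale := scaleGenerators_coeff_magnusExp_sub_one r g order_ne_zero
  rw [coeff_eq, hc, ← Algebra.smul_def, map_smul, smul_comm] at scale
  exact smul_right_injective _ hc0 scale

theorem order_magnusExp_sub_one_eq {m : (FreeAlgebra ℚ ι)⟦X⟧} (hm : augmentation m = 0)
    {g h : FreeGroup ι} (hg : g ∈ congruenceSubgroup (Ideal.span {m}))
    (hh : h ∈ congruenceSubgroup (Ideal.span {m})) (hg1 : g ≠ 1) (hh1 : h ≠ 1) :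
    (magnusExp g - 1).order = (magnusExp h - 1).order := by
  obtain ⟨u, hu⟩ := Ideal.mem_span_singleton'.mp hg
  obtain ⟨v, hv⟩ := Ideal.mem_span_singleton'.mp hh
  have hm0 : m ≠ 0 := right_ne_zero_of_mul (hu ▸ magnusExp_sub_one_ne_zero hg1)
  have pow_eq := smul_left_injective ℚ (PowerSeries.coeff_order hm0) <|
    (scaleGenerators_coeff_order_of_mul_eq hm hg1 hu 2).symm.trans
      (scaleGenerators_coeff_order_of_mul_eq hm hh1 hv 2)
  rw [← PowerSeries.coe_toNat_order (magnusExp_sub_one_ne_zero hg1),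
    ← PowerSeries.coe_toNat_order (magnusExp_sub_one_ne_zero hh1),
    pow_right_injective₀ two_pos (by norm_num) pow_eq]

theorem order_add_order_le_order_commutatorElement (a b : FreeGroup ι) :
    (magnusExp a - 1).order + (magnusExp b - 1).order ≤ (magnusExp ⁅a, b⁆ - 1).order := by
  have commutator_eq : magnusExp ⁅a, b⁆ - 1 = ((magnusExp a - 1) * (magnusExp b - 1) -
      (magnusExp b - 1) * (magnusExp a - 1)) * magnusExp (b * a)⁻¹ := by
    have h : (magnusExp a - 1) * (magnusExp b - 1) - (magnusExp b - 1) * (magnusExp a - 1) =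
        magnusExp (a * b) - magnusExp (b * a) := by
      rw [map_mul, map_mul]
      noncomm_ring
    rw [h, sub_mul, ← map_mul, ← map_mul, mul_inv_cancel, map_one, commutatorElement_def]
    group
  have le_order_ab := PowerSeries.le_order_mul (magnusExp a - 1) (magnusExp b - 1)
  have le_order_ba := PowerSeries.le_order_mul (magnusExp b - 1) (magnusExp a - 1)
  rw [add_comm] at le_order_ba
  rw [← PowerSeries.order_neg (_ * _)] at le_order_ba
  rw [commutator_eq, sub_eq_add_neg (_ * _)]
  exact (le_min le_order_ab le_order_ba).trans <|
    (PowerSeries.min_order_le_order_add _ _).trans <|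
      le_self_add.trans (PowerSeries.le_order_mul _ _)

theorem commute_of_mem_congruenceSubgroup_span_singleton {m : (FreeAlgebra ℚ ι)⟦X⟧}
    (hm : augmentation m = 0) {a b : FreeGroup ι} (ha : a ∈ congruenceSubgroup (Ideal.span {m}))
    (hb : b ∈ congruenceSubgroup (Ideal.span {m})) : Commute a b := by
  obtain rfl | hb1 := eq_or_ne b 1
  · exact Commute.one_right a
  rw [← commutatorElement_eq_one_iff_commute]
  by_contra hab
  have hmem : ⁅a, b⁆ ∈ congruenceSubgroup (Ideal.span {m}) :=
    mul_mem (mul_mem (mul_mem ha hb) (inv_mem ha)) (inv_mem hb)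
  have hle := order_add_order_le_order_commutatorElement a b
  rw [← order_magnusExp_sub_one_eq hm hb hmem hb1 hab,
    ← PowerSeries.coe_toNat_order (magnusExp_sub_one_ne_zero hb1)] at hle
  have succ_le := (add_le_add_left (one_le_order_magnusExp_sub_one a) _).trans hle
  norm_cast at succ_le
  lia

/-! ### Relations between power series with independent linear terms -/

section CoeffOne

variable {R K : Type*} [Ring R] {y : K → R⟦X⟧}

theorem coeff_succ_sum_mul (hy : ∀ k, PowerSeries.constantCoeff (y k) = 0) {s : Finset K}
    {c : K → R⟦X⟧} {n : ℕ} (hc : ∀ k ∈ s, n ≤ (c k).order) :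
    PowerSeries.coeff (n + 1) (∑ k ∈ s, c k * y k) =
      ∑ k ∈ s, PowerSeries.coeff n (c k) * PowerSeries.coeff 1 (y k) := by
  rw [map_sum]
  refine Finset.sum_congr rfl fun k hk => coeff_add_mul_of_le_order (hc k hk) ?_
  rw [Nat.cast_one, PowerSeries.one_le_order_iff_constCoeff_eq_zero, hy]

theorem linearIndependent_of_coeff_one (hy : ∀ k, PowerSeries.constantCoeff (y k) = 0)
    (h : LinearIndependent R fun k => PowerSeries.coeff 1 (y k)) : LinearIndependent R⟦X⟧ y := by
  rw [linearIndependent_iff'] at h ⊢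
  intro s c hc
  have le_order (n : ℕ) : ∀ k ∈ s, n ≤ (c k).order := by
    induction n with
    | zero => simp
    | succ n ih =>
      have coeff_eq_zero := h s (fun k => PowerSeries.coeff n (c k)) <| by
        simp only [smul_eq_mul] at hc ⊢
        rw [← coeff_succ_sum_mul hy ih, hc, map_zero]
      intro k hk
      refine PowerSeries.nat_le_order _ _ fun i hi => ?_
      obtain hlt | rfl := Nat.lt_succ_iff_lt_or_eq.mp hi
      · exact PowerSeries.coeff_of_lt_order i ((Nat.cast_lt.mpr hlt).trans_le (ih k hk))
      · exact coeff_eq_zero k hk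
  intro k hk
  rw [← PowerSeries.order_eq_top, ENat.eq_top_iff_forall_ge]
  exact fun n => le_order n k hk

theorem exists_X_mul_eq_of_mem_span (hy : ∀ k, PowerSeries.constantCoeff (y k) = 0)
    (h : LinearIndependent R fun k => PowerSeries.coeff 1 (y k)) {p : R⟦X⟧}
    (hp : p ∈ Ideal.span (Set.range y)) (hp1 : PowerSeries.coeff 1 p = 0) :
    ∃ q ∈ Ideal.span (Set.range y), PowerSeries.X * q = p := by
  obtain ⟨c, rfl⟩ := Finsupp.mem_span_range_iff_exists_finsupp.mp hp
  simp only [Finsupp.sum, smul_eq_mul] at hp1 ⊢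
  have constantCoeff_eq_zero : ∀ k ∈ c.support, PowerSeries.constantCoeff (c k) = 0 := by
    refine linearIndependent_iff'.mp h c.support _ ?_
    have h0 := coeff_succ_sum_mul hy (s := c.support) (c := c) (n := 0) (by simp)
    simpa [hp1] using h0.symm
  choose! d hd using fun k hk => PowerSeries.X_dvd_iff.mpr (constantCoeff_eq_zero k hk)
  refine ⟨∑ k ∈ c.support, d k * y k, ?_, ?_⟩
  · exact Ideal.sum_mem _ fun k _ => Ideal.mul_mem_left _ _ (Ideal.subset_span ⟨k, rfl⟩)
  · rw [Finset.mul_sum]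
    exact Finset.sum_congr rfl fun k hk => by rw [hd k hk, mul_assoc]

end CoeffOne

theorem isPrincipal_ker_linearCombination {R M K : Type*} [Ring R] [AddCommGroup M] [Module R M]
    [Fintype K] {y : K → M} {k₀ : K} (hy : LinearIndependent R fun k : {k // k ≠ k₀} => y k)
    (hk₀ : y k₀ ∈ Submodule.span R (Set.range fun k : {k // k ≠ k₀} => y k)) :
    (LinearMap.ker (Fintype.linearCombination R y)).IsPrincipal := by
  classical
  obtain ⟨e, he⟩ := (Submodule.mem_span_range_iff_exists_fun R).mp hk₀
  have sum_eq (r : K → R) :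
      ∑ k, r k • y k = ∑ k : {k // k ≠ k₀}, (r k + r k₀ * e k) • y k := by
    rw [Fintype.sum_eq_add_sum_subtype_ne _ k₀, ← he]
    simp only [add_smul, mul_smul, Finset.sum_add_distrib, Finset.smul_sum]
    exact add_comm _ _
  refine ⟨fun k => if h : k ≠ k₀ then -e ⟨k, h⟩ else 1, ?_⟩
  ext r
  rw [LinearMap.mem_ker, Fintype.linearCombination_apply, sum_eq, Submodule.mem_span_singleton]
  constructor
  · intro h
    refine ⟨r k₀, funext fun k => ?_⟩
    obtain rfl | hk := eq_or_ne k k₀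
    · simp
    · have := Fintype.linearIndependent_iff.mp hy _ h ⟨k, hk⟩
      simp [hk, eq_neg_of_add_eq_zero_left this]
  · rintro ⟨δ, rfl⟩
    refine Finset.sum_eq_zero fun k _ => ?_
    simp [k.2]

/-- The representation of the free algebra by upper triangular matrices whose upper right corner
maps `a * v` to `f v • a` for all `v` of degree one. -/
def cornerRepresentation (f : FreeAlgebra ℚ ι →ₗ[ℚ] ℚ) :
    FreeAlgebra ℚ ι →ₐ[ℚ] Matrix (Fin 2) (Fin 2) (FreeAlgebra ℚ ι) :=
  FreeAlgebra.lift ℚ fun i =>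
    !![FreeAlgebra.ι ℚ i, algebraMap ℚ _ (f (FreeAlgebra.ι ℚ i)); 0, 0]

theorem cornerRepresentation_apply_col_zero (f : FreeAlgebra ℚ ι →ₗ[ℚ] ℚ) (a : FreeAlgebra ℚ ι) :
    cornerRepresentation f a 0 0 = a ∧ cornerRepresentation f a 1 0 = 0 := by
  induction a with
  | grade0 r => simp [Matrix.algebraMap_matrix_apply]
  | grade1 i => simp [cornerRepresentation]
  | mul a b ha hb => simp [Matrix.mul_apply, ha, hb]
  | add a b ha hb => simp [ha, hb]

theorem cornerRepresentation_mul_apply (f : FreeAlgebra ℚ ι →ₗ[ℚ] ℚ) (a : FreeAlgebra ℚ ι)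
    {v : FreeAlgebra ℚ ι} (hv : v ∈ Submodule.span ℚ (Set.range (FreeAlgebra.ι ℚ))) :
    cornerRepresentation f (a * v) 0 1 = f v • a := by
  induction hv using Submodule.span_induction with
  | mem v hv =>
    obtain ⟨i, rfl⟩ := hv
    rw [map_mul, Matrix.mul_apply, Fin.sum_univ_two, (cornerRepresentation_apply_col_zero f a).1]
    simp [cornerRepresentation, Algebra.smul_def, Algebra.commutes]
  | zero => simp
  | add v w _ _ hv hw =>
    rw [mul_add, map_add, Matrix.add_apply, hv, hw, map_add, add_smul]
  | smul r v _ hv =>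
    rw [mul_smul_comm, map_smul, Matrix.smul_apply, hv, map_smul, smul_assoc]

theorem linearIndependent_freeAlgebra_of_linearIndependent {K : Type*} {v : K → FreeAlgebra ℚ ι}
    (hmem : ∀ k, v k ∈ Submodule.span ℚ (Set.range (FreeAlgebra.ι ℚ)))
    (hv : LinearIndependent ℚ v) : LinearIndependent (FreeAlgebra ℚ ι) v := by
  classical
  obtain ⟨g, hg⟩ := LinearMap.exists_leftInverse_of_injective (Finsupp.linearCombination ℚ v)
    (LinearMap.ker_eq_bot.mpr hv)
  have g_apply (k : K) : g (v k) = Finsupp.single k 1 := by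
    simpa using LinearMap.congr_fun hg (Finsupp.single k 1)
  rw [linearIndependent_iff']
  intro s c hc j hj
  have h := congrArg (fun a => cornerRepresentation (Finsupp.lapply j ∘ₗ g) a 0 1) hc
  simp only [smul_eq_mul, map_sum, Matrix.sum_apply, cornerRepresentation_mul_apply _ _ (hmem _),
    LinearMap.comp_apply, g_apply, Finsupp.lapply_apply, Finsupp.single_apply, ite_smul, one_smul,
    zero_smul, Finset.sum_ite_eq', hj, if_true, map_zero, Matrix.zero_apply] at h
  exact h

/-! ### Relations between generators of the free group -/

/-- The component of degree one of `magnusExp g`, that is, the class of `g` in the rational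
abelianization of the free group. -/
def linearPart (g : FreeGroup ι) : FreeAlgebra ℚ ι :=
  PowerSeries.coeff 1 (magnusExp g - 1)

@[simp]
theorem linearPart_of (i : ι) : linearPart (.of i) = FreeAlgebra.ι ℚ i := by
  simp [linearPart, PowerSeries.coeff_one]

@[simp]
theorem linearPart_one : linearPart (1 : FreeGroup ι) = 0 := by
  simp [linearPart]

theorem linearPart_mul (g h : FreeGroup ι) : linearPart (g * h) = linearPart g + linearPart h := by
  have h1 (g : FreeGroup ι) : ((1 : ℕ) : ℕ∞) ≤ (magnusExp g - 1).order :=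
    one_le_order_magnusExp_sub_one g
  have mul_eq : magnusExp (g * h) - 1 =
      (magnusExp g - 1) * (magnusExp h - 1) + (magnusExp g - 1) + (magnusExp h - 1) := by
    rw [map_mul]
    noncomm_ring
  have lt_order_mul : ((1 : ℕ) : ℕ∞) < ((magnusExp g - 1) * (magnusExp h - 1)).order :=
    (by norm_num : ((1 : ℕ) : ℕ∞) < (1 : ℕ) + (1 : ℕ)).trans_le <|
      (add_le_add (h1 g) (h1 h)).trans (PowerSeries.le_order_mul _ _)
  rw [linearPart, mul_eq, map_add, map_add, PowerSeries.coeff_of_lt_order 1 lt_order_mul, zero_add,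
    linearPart, linearPart]

theorem linearPart_inv (g : FreeGroup ι) : linearPart g⁻¹ = -linearPart g := by
  rw [eq_neg_iff_add_eq_zero, ← linearPart_mul, inv_mul_cancel, linearPart_one]

theorem linearPart_mem_span_of_mem_closure {s : Set (FreeGroup ι)} {g : FreeGroup ι}
    (hg : g ∈ Subgroup.closure s) : linearPart g ∈ Submodule.span ℚ (linearPart '' s) := by
  induction hg using Subgroup.closure_induction with
  | mem g hg => exact Submodule.subset_span ⟨g, hg, rfl⟩
  | one => rw [linearPart_one]; exact Submodule.zero_mem _
  | mul g h _ _ hg hh => rw [linearPart_mul]; exact Submodule.add_mem _ hg hh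
  | inv g _ hg => rw [linearPart_inv]; exact Submodule.neg_mem _ hg

theorem linearPart_mem_span_ι (g : FreeGroup ι) :
    linearPart g ∈ Submodule.span ℚ (Set.range (FreeAlgebra.ι ℚ)) := by
  have hg : g ∈ Subgroup.closure (Set.range FreeGroup.of) :=
    FreeGroup.closure_range_of ι ▸ Subgroup.mem_top g
  simpa only [← Set.range_comp, Function.comp_def, linearPart_of] using
    linearPart_mem_span_of_mem_closure hg

theorem span_linearPart_of_closure_eq_top {s : Set (FreeGroup ι)} (hs : Subgroup.closure s = ⊤) :
    Submodule.span ℚ (linearPart '' s) = Submodule.span ℚ (Set.range (FreeAlgebra.ι ℚ)) := by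
  refine le_antisymm (Submodule.span_le.mpr ?_) (Submodule.span_le.mpr ?_)
  · rintro _ ⟨g, -, rfl⟩
    exact linearPart_mem_span_ι g
  · rintro _ ⟨i, rfl⟩
    exact linearPart_of i ▸ linearPart_mem_span_of_mem_closure (hs ▸ Subgroup.mem_top _)

theorem linearIndependent_freeAlgebra_ι : LinearIndependent ℚ (FreeAlgebra.ι ℚ : ι → _) := by
  have basis_comp_of : FreeAlgebra.basisFreeMonoid ℚ ι ∘ FreeMonoid.of = FreeAlgebra.ι ℚ := by
    ext i
    refine (AlgEquiv.symm_apply_eq FreeAlgebra.equivMonoidAlgebraFreeMonoid).mpr ?_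
    simp [FreeAlgebra.equivMonoidAlgebraFreeMonoid]
  exact basis_comp_of ▸
    (FreeAlgebra.basisFreeMonoid ℚ ι).linearIndependent.comp _ FreeMonoid.of_injective

theorem finite_of_closure_eq_top {s : Set (FreeGroup ι)} [Finite s] (hs : Subgroup.closure s = ⊤) :
    Finite ι :=
  linearIndependent_freeAlgebra_ι.finite_of_le_span_finite _ (linearPart '' s) <| by
    rw [span_linearPart_of_closure_eq_top hs]
    exact Submodule.subset_span

theorem finrank_span_linearPart [Finite ι] {s : Set (FreeGroup ι)}
    (hs : Subgroup.closure s = ⊤) : Set.finrank ℚ (linearPart '' s) = Nat.card ι := by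
  have := Fintype.ofFinite ι
  rw [Set.finrank, span_linearPart_of_closure_eq_top hs,
    finrank_span_eq_card linearIndependent_freeAlgebra_ι, Nat.card_eq_fintype_card]

theorem constantCoeff_magnusExp_sub_one (g : FreeGroup ι) :
    PowerSeries.constantCoeff (magnusExp g - 1) = 0 := by
  simp

theorem linearIndependent_magnusExp_sub_one {K : Type*} {g : K → FreeGroup ι}
    (hg : LinearIndependent ℚ fun k => linearPart (g k)) :
    LinearIndependent (FreeAlgebra ℚ ι)⟦X⟧ fun k => magnusExp (g k) - 1 :=
  linearIndependent_of_coeff_one (fun k => constantCoeff_magnusExp_sub_one (g k)) <|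
    linearIndependent_freeAlgebra_of_linearIndependent (fun k => linearPart_mem_span_ι (g k)) hg

theorem magnusExp_sub_one_mem_span_of_mem_closure {s : Set (FreeGroup ι)} {g : FreeGroup ι}
    (hg : g ∈ Subgroup.closure s) :
    magnusExp g - 1 ∈ Ideal.span ((fun x => magnusExp x - 1) '' s) := by
  have h : Subgroup.closure s ≤ congruenceSubgroup (Ideal.span ((fun x => magnusExp x - 1) '' s)) :=
    (Subgroup.closure_le _).mpr fun x hx => Ideal.subset_span ⟨x, hx, rfl⟩
  exact h hg

theorem span_magnusExp_sub_one_of_closure_eq_top {s : Set (FreeGroup ι)}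
    (hs : Subgroup.closure s = ⊤) :
    Ideal.span ((fun x => magnusExp x - 1) '' s) =
      Ideal.span (Set.range fun i : ι => magnusExp (.of i) - 1) := by
  have hof : (Set.range fun i : ι => magnusExp (.of i) - 1) =
      (fun x => magnusExp x - 1) '' Set.range FreeGroup.of := by
    rw [← Set.range_comp]
    rfl
  rw [hof]
  refine le_antisymm (Ideal.span_le.mpr ?_) (Ideal.span_le.mpr ?_) <;> rintro _ ⟨x, -, rfl⟩ <;>
    refine magnusExp_sub_one_mem_span_of_mem_closure ?_
  · exact FreeGroup.closure_range_of ι ▸ Subgroup.mem_top x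
  · exact hs ▸ Subgroup.mem_top x

theorem exists_mem_span_coeff_one_eq {s : Set (FreeGroup ι)} {v : FreeAlgebra ℚ ι}
    (hv : v ∈ Submodule.span ℚ (linearPart '' s)) :
    ∃ z ∈ Ideal.span ((fun x => magnusExp x - 1) '' s), PowerSeries.coeff 1 z = v := by
  induction hv using Submodule.span_induction with
  | mem v hv =>
    obtain ⟨x, hx, rfl⟩ := hv
    exact ⟨_, Ideal.subset_span ⟨x, hx, rfl⟩, rfl⟩
  | zero => exact ⟨0, Submodule.zero_mem _, map_zero _⟩
  | add v w _ _ hv hw =>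
    obtain ⟨y, hy, rfl⟩ := hv
    obtain ⟨z, hz, rfl⟩ := hw
    exact ⟨y + z, Submodule.add_mem _ hy hz, map_add _ _ _⟩
  | smul r v _ hv =>
    obtain ⟨z, hz, rfl⟩ := hv
    exact ⟨r • z, Submodule.smul_of_tower_mem _ r hz, PowerSeries.coeff_smul _ _ _⟩

theorem magnusExp_sub_one_mem_span_of_linearPart_mem_span {s : Set (FreeGroup ι)} {g : FreeGroup ι}
    (hs : Subgroup.closure (insert g s) = ⊤)
    (hg : linearPart g ∈ Submodule.span ℚ (linearPart '' s)) :
    magnusExp g - 1 ∈ Ideal.span ((fun x => magnusExp x - 1) '' s) := by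
  set N := Ideal.span ((fun x => magnusExp x - 1) '' s)
  have span_eq :
      Ideal.span (insert (magnusExp g - 1) ((fun x => magnusExp x - 1) '' s)) =
      Ideal.span (Set.range fun i : ι => magnusExp (.of i) - 1) := by
    rw [← span_magnusExp_sub_one_of_closure_eq_top hs, Set.image_insert_eq]
  obtain ⟨z, hz, hz1⟩ := exists_mem_span_coeff_one_eq hg
  have hgz : magnusExp g - 1 - z ∈ Ideal.span (Set.range fun i : ι => magnusExp (.of i) - 1) := by
    rw [← span_eq]
    exact Ideal.sub_mem _ (Ideal.subset_span (Set.mem_insert ..))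
      (Ideal.span_mono (Set.subset_insert ..) hz)
  obtain ⟨q, hq, hXq⟩ := exists_X_mul_eq_of_mem_span
    (fun i => constantCoeff_magnusExp_sub_one (.of i))
    (linearIndependent_freeAlgebra_of_linearIndependent (fun i => linearPart_mem_span_ι (.of i)) <|
      (funext linearPart_of).symm ▸ linearIndependent_freeAlgebra_ι) hgz
    (by rw [map_sub, hz1, ← linearPart, sub_self])
  obtain ⟨a, w, hw, rfl⟩ := Ideal.mem_span_insert.mp (span_eq ▸ hq)
  have mul_mem : (1 - PowerSeries.X * a) * (magnusExp g - 1) ∈ N := by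
    have h : (1 - PowerSeries.X * a) * (magnusExp g - 1) = PowerSeries.X * w + z := by
      rw [mul_add, eq_sub_iff_add_eq] at hXq
      nth_rewrite 1 [sub_mul, ← hXq]
      noncomm_ring
    rw [h]
    exact N.add_mem (N.mul_mem_left _ hw) hz
  have isUnit : IsUnit (1 - PowerSeries.X * a) := PowerSeries.isUnit_iff_constantCoeff.mpr (by simp)
  obtain ⟨v, hv⟩ := isUnit.exists_left_inv
  simpa only [← mul_assoc, hv, one_mul] using N.mul_mem_left v mul_mem

theorem isPrincipal_ker_linearCombination_magnusExp_sub_one [Finite ι] {K : Type*} [Fintype K]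
    {g : K → FreeGroup ι} (hg : Subgroup.closure (Set.range g) = ⊤)
    (hcard : Fintype.card K ≤ Nat.card ι + 1) :
    (LinearMap.ker (Fintype.linearCombination (FreeAlgebra ℚ ι)⟦X⟧
      fun k => magnusExp (g k) - 1)).IsPrincipal := by
  classical
  by_cases hli : LinearIndependent ℚ fun k => linearPart (g k)
  · rw [LinearMap.ker_eq_bot.mpr (linearIndependent_iff_injective_fintypeLinearCombination.mp
      (linearIndependent_magnusExp_sub_one hli))]
    exact bot_isPrincipal
  rw [linearIndependent_iff_notMem_span] at hli
  push Not at hli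
  obtain ⟨k₀, hk₀⟩ := hli
  have range_eq {α : Type _} (f : FreeGroup ι → α) :
      Set.range (fun k : {k // k ≠ k₀} => f (g k)) = f '' (g '' {k₀}ᶜ) := by
    rw [← Set.image_comp, Set.image_eq_range]
    rfl
  have closure_insert : Subgroup.closure (insert (g k₀) (g '' {k₀}ᶜ)) = ⊤ := by
    rw [Set.insert_image_compl_eq_range, hg]
  have linearPart_mem : linearPart (g k₀) ∈ Submodule.span ℚ (linearPart '' (g '' {k₀}ᶜ)) := by
    rwa [← Set.image_comp, Set.compl_eq_univ_sdiff]
  refine isPrincipal_ker_linearCombination (k₀ := k₀) (linearIndependent_magnusExp_sub_one ?_) ?_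
  · have card_eq : Fintype.card {k // k ≠ k₀} = Fintype.card K - 1 := Set.card_ne_eq k₀
    rw [linearIndependent_iff_card_le_finrank_span, range_eq, Set.finrank,
      ← Submodule.span_insert_eq_span linearPart_mem, ← Set.image_insert_eq, ← Set.finrank,
      finrank_span_linearPart closure_insert, card_eq]
    lia
  · rw [range_eq fun x => magnusExp x - 1]
    exact magnusExp_sub_one_mem_span_of_linearPart_mem_span closure_insert linearPart_mem

/-! ### Rank -/

section Rank

variable {Γ Δ : Type*} [Group Γ] [Group Δ] {H : Subgroup Γ}

theorem rk_le_card {S : Finset Γ} (hS : Subgroup.closure (S : Set Γ) = H) : H.rk ≤ S.card :=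
  sInf_le ⟨S, rfl, hS⟩

theorem exists_finset_card_eq_rk (h : H.rk ≠ ⊤) :
    ∃ S : Finset Γ, (S.card : ℕ∞) = H.rk ∧ Subgroup.closure (S : Set Γ) = H := by
  have hne : {n : ℕ∞ | ∃ S : Finset Γ,
      (S.card : ℕ∞) = n ∧ Subgroup.closure (S : Set Γ) = H}.Nonempty := by
    refine Set.nonempty_iff_ne_empty.mpr fun hempty => h ?_
    rw [Subgroup.rk, hempty, sInf_empty]
  exact csInf_mem hne

theorem rk_map_le (f : Γ →* Δ) (H : Subgroup Γ) : (H.map f).rk ≤ H.rk := by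
  classical
  by_cases h : H.rk = ⊤
  · exact h ▸ le_top
  obtain ⟨S, hS, rfl⟩ := exists_finset_card_eq_rk h
  rw [← hS]
  refine (rk_le_card (S := S.image f) ?_).trans (Nat.cast_le.mpr Finset.card_image_le)
  rw [Finset.coe_image, MonoidHom.map_closure]

theorem rk_map_of_injective {f : Γ →* Δ} (hf : Function.Injective f) (H : Subgroup Γ) :
    (H.map f).rk = H.rk := by
  classical
  refine (rk_map_le f H).antisymm ?_
  by_cases h : (H.map f).rk = ⊤
  · exact h ▸ le_top
  obtain ⟨S, hS, closure_eq⟩ := exists_finset_card_eq_rk h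
  have hsub : (S : Set Δ) ⊆ f '' H := by
    rw [← Subgroup.coe_map, ← closure_eq]
    exact Subgroup.subset_closure
  obtain ⟨T, -, rfl⟩ := Finset.subset_set_image_iff.mp hsub
  rw [← hS, Finset.card_image_of_injective T hf]
  rw [Finset.coe_image, ← MonoidHom.map_closure] at closure_eq
  exact rk_le_card (Subgroup.map_injective hf closure_eq)

theorem rk_sup_le (H K : Subgroup Γ) : (H ⊔ K).rk ≤ H.rk + K.rk := by
  classical
  by_cases hH : H.rk = ⊤
  · rw [hH, top_add]
    exact le_top
  by_cases hK : K.rk = ⊤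
  · rw [hK, add_top]
    exact le_top
  obtain ⟨S, hS, rfl⟩ := exists_finset_card_eq_rk hH
  obtain ⟨T, hT, rfl⟩ := exists_finset_card_eq_rk hK
  rw [← hS, ← hT, ← Nat.cast_add]
  refine (rk_le_card (S := S ∪ T) ?_).trans (Nat.cast_le.mpr (Finset.card_union_le S T))
  rw [Finset.coe_union, Subgroup.closure_union]

theorem isMulCommutative_of_rk_lt_two (h : H.rk < 2) : IsMulCommutative H := by
  obtain ⟨S, hS, rfl⟩ := exists_finset_card_eq_rk (ne_top_of_lt h)
  rw [← hS] at h
  have card_le_one : S.card ≤ 1 := Nat.lt_succ_iff.mp (by exact_mod_cast h)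
  refine Subgroup.isMulCommutative_closure fun x hx y hy => ?_
  rw [Finset.card_le_one.mp card_le_one x hx y hy]

theorem isMulCommutative_of_le {K : Subgroup Γ} [IsMulCommutative K] (hle : H ≤ K) :
    IsMulCommutative H :=
  .of_setLike_mul_comm fun _ ha _ hb => setLike_mul_comm (s := K) (hle ha) (hle hb)

theorem rk_range_le_card {ι : Type*} (f : FreeGroup ι →* Γ) : f.range.rk ≤ ENat.card ι := by
  classical
  cases finite_or_infinite ι
  · have := Fintype.ofFinite ι
    rw [ENat.card_eq_coe_fintype_card]
    refine (rk_le_card (S := Finset.univ.image (f ∘ .of)) ?_).trans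
      (Nat.cast_le.mpr Finset.card_image_le)
    rw [Finset.coe_image, Finset.coe_univ, Set.image_univ, Set.range_comp, ← MonoidHom.map_closure,
      FreeGroup.closure_range_of, MonoidHom.range_eq_map]
  · rw [ENat.card_eq_top_of_infinite]
    exact le_top

theorem exists_freeGroup_hom_injective_range_eq.{u} {Γ : Type u} [Group Γ] (H : Subgroup Γ)
    [IsFreeGroup H] :
    ∃ (ι : Type u) (f : FreeGroup ι →* Γ), Function.Injective f ∧ f.range = H := by
  refine ⟨_, H.subtype.comp (IsFreeGroup.mulEquiv H).toMonoidHom, ?_, ?_⟩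
  · exact H.subtype_injective.comp (IsFreeGroup.mulEquiv H).injective
  · rw [MonoidHom.range_comp, MonoidHom.range_eq_top.mpr (IsFreeGroup.mulEquiv H).surjective,
      ← MonoidHom.range_eq_map, Subgroup.range_subtype]

theorem subsingleton_of_isMulCommutative_freeGroup (ι : Type*) [IsMulCommutative (FreeGroup ι)] :
    Subsingleton ι := by
  classical
  refine ⟨fun i j => ?_⟩
  have h : i = j ∧ j = i := by
    simpa [FreeGroup.toWord_mul, FreeGroup.reduce.cons] using
      congrArg FreeGroup.toWord (mul_comm' (FreeGroup.of i) (FreeGroup.of j))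
  exact h.1

theorem rk_le_one_of_isMulCommutative (H : Subgroup Γ) [IsFreeGroup H] [IsMulCommutative H] :
    H.rk ≤ 1 := by
  obtain ⟨ι, f, hf, rfl⟩ := exists_freeGroup_hom_injective_range_eq H
  have : IsMulCommutative (FreeGroup ι) :=
    isMulCommutative_iff.mpr fun a b => hf <| by
      rw [map_mul, map_mul]
      exact setLike_mul_comm (s := f.range) ⟨a, rfl⟩ ⟨b, rfl⟩
  exact (rk_range_le_card f).trans <|
    (ENat.card_le_one_iff_subsingleton ι).mpr (subsingleton_of_isMulCommutative_freeGroup ι)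

theorem IsKFree.not_isMulCommutative {k : ℕ} (hfree : IsKFree k Γ) {K : Subgroup Γ} (hle : H ≤ K)
    (hk : H.rk ≤ k) (hH : 1 < H.rk) : ¬IsMulCommutative K := fun _ =>
  have := hfree H hk
  have := isMulCommutative_of_le hle
  hH.not_ge (rk_le_one_of_isMulCommutative H)

end Rank

theorem exists_sum_eq_magnusExp_sub_one_of_mem_closure {S : Type*} [Fintype S]
    {p : S → FreeGroup ι} {x : FreeGroup ι} (hx : x ∈ Subgroup.closure (Set.range p)) :
    ∃ a : S → (FreeAlgebra ℚ ι)⟦X⟧, ∑ s, a s • (magnusExp (p s) - 1) = magnusExp x - 1 := by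
  have hmem := magnusExp_sub_one_mem_span_of_mem_closure hx
  rw [← Set.range_comp] at hmem
  exact (Submodule.mem_span_range_iff_exists_fun _).mp hmem

-- Writing `magnusExp x - 1` in terms of the generators of `P` and in terms of those of `Q` gives a
-- relation between all generators. As the relations are the multiples of a single one, so are their
-- parts supported on the generators of `P`.
theorem exists_inf_le_congruenceSubgroup_span_singleton [Finite ι] {S T : Type*} [Fintype S]
    [Fintype T] {p : S → FreeGroup ι} {q : T → FreeGroup ι}
    (hpq : Subgroup.closure (Set.range p) ⊔ Subgroup.closure (Set.range q) = ⊤)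
    (hcard : Fintype.card S + Fintype.card T ≤ Nat.card ι + 1) :
    ∃ m : (FreeAlgebra ℚ ι)⟦X⟧, augmentation m = 0 ∧
      Subgroup.closure (Set.range p) ⊓ Subgroup.closure (Set.range q) ≤
        congruenceSubgroup (Ideal.span {m}) := by
  rw [← Subgroup.closure_union, ← Set.Sum.elim_range] at hpq
  obtain ⟨κ, hκ⟩ := isPrincipal_ker_linearCombination_magnusExp_sub_one hpq
    (Fintype.card_sum.trans_le hcard)
  refine ⟨∑ s, κ (.inl s) * (magnusExp (p s) - 1), ?_, ?_⟩
  · simp [map_sum, augmentation_magnusExp]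
  rintro x ⟨hxp, hxq⟩
  obtain ⟨a, ha⟩ := exists_sum_eq_magnusExp_sub_one_of_mem_closure hxp
  obtain ⟨b, hb⟩ := exists_sum_eq_magnusExp_sub_one_of_mem_closure hxq
  have mem_ker : Sum.elim a (-b) ∈ LinearMap.ker (Fintype.linearCombination (FreeAlgebra ℚ ι)⟦X⟧
      fun k => magnusExp (Sum.elim p q k) - 1) := by
    rw [LinearMap.mem_ker, Fintype.linearCombination_apply, Fintype.sum_sum_type]
    simp only [Sum.elim_inl, Sum.elim_inr, Pi.neg_apply, neg_smul, Finset.sum_neg_distrib, ha, hb,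
      add_neg_cancel]
  rw [hκ, Submodule.mem_span_singleton] at mem_ker
  obtain ⟨δ, hδ⟩ := mem_ker
  refine Ideal.mem_span_singleton'.mpr ⟨δ, ?_⟩
  rw [← ha, Finset.mul_sum]
  refine Finset.sum_congr rfl fun s _ => ?_
  rw [← mul_assoc, smul_eq_mul, ← Sum.elim_inl a (-b) s, ← hδ, Pi.smul_apply, smul_eq_mul]

theorem card_add_two_le_rk_add_rk {P Q : Subgroup (FreeGroup ι)} (hPQ : P ⊔ Q = ⊤)
    (h : ¬IsMulCommutative ↥(P ⊓ Q)) : ENat.card ι + 2 ≤ P.rk + Q.rk := by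
  by_cases hP : P.rk = ⊤
  · rw [hP, top_add]
    exact le_top
  by_cases hQ : Q.rk = ⊤
  · rw [hQ, add_top]
    exact le_top
  obtain ⟨S, hS, rfl⟩ := exists_finset_card_eq_rk hP
  obtain ⟨T, hT, rfl⟩ := exists_finset_card_eq_rk hQ
  have : Finite ι := finite_of_closure_eq_top (s := S ∪ T) <| by rw [Subgroup.closure_union, hPQ]
  rw [← hS, ← hT, ENat.card_eq_coe_natCard]
  norm_cast
  by_contra! hlt
  obtain ⟨m, hm, hle⟩ := exists_inf_le_congruenceSubgroup_span_singleton
    (p := ((↑) : S → FreeGroup ι)) (q := ((↑) : T → FreeGroup ι)) (by simpa using hPQ)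
    (by simpa using Nat.lt_succ_iff.mp hlt)
  simp only [Subtype.range_coe_subtype, Finset.setOfPred_mem] at hle
  exact h <| .of_setLike_mul_comm fun a ha b hb =>
    commute_of_mem_congruenceSubgroup_span_singleton hm (hle ha) (hle hb)

theorem rk_sup_add_two_le_rk_add_rk {Γ : Type*} [Group Γ] {P Q : Subgroup Γ}
    [IsFreeGroup ↥(P ⊔ Q)] (h : ¬IsMulCommutative ↥(P ⊓ Q)) : (P ⊔ Q).rk + 2 ≤ P.rk + Q.rk := by
  obtain ⟨ι, f, hf, hrange⟩ := exists_freeGroup_hom_injective_range_eq (P ⊔ Q)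
  have hP : P ≤ f.range := le_sup_left.trans hrange.ge
  have hQ : Q ≤ f.range := le_sup_right.trans hrange.ge
  have comap_sup_eq_top : P.comap f ⊔ Q.comap f = ⊤ := by
    rw [Subgroup.comap_sup_eq_of_le_range f hP hQ, ← hrange, MonoidHom.comap_range_self]
  have not_comm : ¬IsMulCommutative ↥(P.comap f ⊓ Q.comap f) := fun _ => h <| by
    rw [← Subgroup.map_comap_eq_self (inf_le_left.trans hP : P ⊓ Q ≤ f.range), Subgroup.comap_inf]
    infer_instance
  calc (P ⊔ Q).rk + 2 ≤ ENat.card ι + 2 := by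
        gcongr
        exact hrange ▸ rk_range_le_card f
    _ ≤ (P.comap f).rk + (Q.comap f).rk := card_add_two_le_rk_add_rk comap_sup_eq_top not_comm
    _ = P.rk + Q.rk := by
        rw [← rk_map_of_injective hf, ← rk_map_of_injective hf, Subgroup.map_comap_eq_self hP,
          Subgroup.map_comap_eq_self hQ]

end

theorem stmt2_general {Γ : Type*} [Group Γ] {k : ℕ} (hfree : IsKFree k Γ) {P Q : Subgroup Γ}
    (hk : P.rk + Q.rk ≤ k) (hPQ : ¬IsMulCommutative ↥(P ⊓ Q)) :
    2 ≤ (P ⊔ Q).rk ∧ (P ⊔ Q).rk + 2 ≤ P.rk + Q.rk := by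
  have : IsFreeGroup ↥(P ⊔ Q) := hfree _ ((rk_sup_le P Q).trans hk)
  refine ⟨?_, rk_sup_add_two_le_rk_add_rk hPQ⟩
  by_contra! hlt
  have := isMulCommutative_of_rk_lt_two hlt
  exact hPQ (isMulCommutative_of_le (inf_le_left.trans le_sup_left : P ⊓ Q ≤ P ⊔ Q))

/-- If `Γ` is `4`-free and `P`, `Q` are subgroups of rank exactly `2` whose intersection
contains a subgroup of rank `2`, then `⟨P ∪ Q⟩` has rank exactly `2`. -/
theorem stmt2 {Γ : Type*} [Group Γ] (hfree : IsKFree 4 Γ) (P Q : Subgroup Γ)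
    (hP : P.rk = (2 : ℕ∞)) (hQ : Q.rk = (2 : ℕ∞))
    (hInt : ∃ R : Subgroup Γ, R ≤ P ⊓ Q ∧ R.rk = (2 : ℕ∞)) :
    (P ⊔ Q).rk = (2 : ℕ∞) := by
  obtain ⟨R, hR, hR2⟩ := hInt
  obtain ⟨two_le, add_two_le⟩ := stmt2_general hfree (by rw [hP, hQ]; norm_num)
    (hfree.not_isMulCommutative hR (by rw [hR2]; norm_num) (by rw [hR2]; norm_num))
  rw [hP, hQ] at add_two_le
  exact ((ENat.add_le_add_iff_right (by norm_num)).mp add_two_le).antisymm two_le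
end

section
/- Let w and R be real numbers with 0 < w < R. Set ε = e^{−w}·√(1 − cosh²w/cosh²R) and, for 0 ≤ r ≤ sinh R, L(r) = cosh R − √(sinh²R − r²). Let K ⊂ ℝ³ be the set of points (x, y, t) satisfying x² + y² + (t − cosh R)² ≤ sinh²R and x² + y² + t² ≤ e^{−2w} (every point of K has t > 0, since cosh R − sinh R = e^{−R} > 0). Then the Lebesgue integral of t^{−3} over K equals π( e^R·cosh R − cosh R/L(ε) − log L(ε) − R + (1/2)·log(e^{−2w} − ε²) + w ). -/
open MeasureTheory

/-- `ε(R, w) = e^{−w}√(1 − cosh²w/cosh²R)`. -/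
noncomputable def eps (R w : ℝ) : ℝ :=
  Real.exp (-w) * Real.sqrt (1 - Real.cosh w ^ 2 / Real.cosh R ^ 2)

/-- `L(R, r) = cosh R − √(sinh²R − r²)`. -/
noncomputable def Lfun (R r : ℝ) : ℝ := Real.cosh R - Real.sqrt (Real.sinh R ^ 2 - r ^ 2)

/-!
The horizontal slice of the cap at height `t` is a disc of squared radius
`min (2 t cosh R - 1) (e^{-2w}) - t²`, which is nonnegative exactly for `e^{-R} ≤ t ≤ e^{-w}`, so
Cavalieri's principle leaves a one-variable integral. The two Euclidean spheres meet in a horizontal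
circle at the height `s` with `2 s cosh R = 1 + e^{-2w}`; below `s` the first term of the minimum is
the smaller one, above `s` the second. Both pieces have elementary antiderivatives. Finally `ε` is
the radius of the circle, so `e^{-2w} - ε² = s²`, and `L(ε) = s` as soon as the circle lies on the
lower hemisphere of the ball, that is, `s ≤ cosh R`, or equivalently `e^{-2w} ≤ cosh 2R`.
-/

open Real Set
open scoped Interval

section Cavalieri

variable {α β E : Type*} [MeasurableSpace α] [MeasurableSpace β] [NormedAddCommGroup E]
  [NormedSpace ℝ E] {μ : Measure α} {ν : Measure β} [SFinite μ] [SFinite ν]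

theorem map_snd_restrict_prod {S : Set (α × β)} (hS : MeasurableSet S) :
    ((μ.prod ν).restrict S).map Prod.snd =
      ν.withDensity fun y => μ ((fun x => (x, y)) ⁻¹' S) := by
  ext T hT
  rw [Measure.map_apply measurable_snd hT, Measure.restrict_apply (measurable_snd hT),
    Measure.prod_apply_symm ((measurable_snd hT).inter hS), withDensity_apply _ hT,
    ← lintegral_indicator hT]
  refine lintegral_congr fun y => ?_
  by_cases hy : y ∈ T <;> simp [hy, preimage_preimage]

theorem setIntegral_comp_snd_prod {S : Set (α × β)} (hS : MeasurableSet S)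
    (hfin : ∀ᵐ y ∂ν, μ ((fun x => (x, y)) ⁻¹' S) < ⊤) {f : β → E}
    (hf : AEStronglyMeasurable f ν) :
    ∫ z in S, f z.2 ∂μ.prod ν = ∫ y, μ.real ((fun x => (x, y)) ⁻¹' S) • f y ∂ν := by
  have hmap := map_snd_restrict_prod (μ := μ) (ν := ν) hS
  have hf_map : AEStronglyMeasurable f (((μ.prod ν).restrict S).map Prod.snd) :=
    hmap ▸ hf.mono_ac (withDensity_absolutelyContinuous _ _)
  rw [← integral_map measurable_snd.aemeasurable hf_map, hmap,
    integral_withDensity_eq_integral_toReal_smul (measurable_measure_prodMk_right hS) hfin]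
  rfl

end Cavalieri

section SolidOfRevolution

theorem volume_setOf_sq_add_sq_le (a : ℝ) :
    volume {p : ℝ × ℝ | p.1 ^ 2 + p.2 ^ 2 ≤ a} = ENNReal.ofReal (π * a) := by
  rcases lt_or_ge a 0 with ha | ha
  · have hempty : {p : ℝ × ℝ | p.1 ^ 2 + p.2 ^ 2 ≤ a} = ∅ :=
      eq_empty_of_forall_notMem fun p hp => by
        linarith [sq_nonneg p.1, sq_nonneg p.2, mem_ofPred_eq ▸ hp]
    rw [hempty, measure_empty, ENNReal.ofReal_of_nonpos (by nlinarith [pi_pos])]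
  · have hball : Complex.measurableEquivRealProd ⁻¹' {p : ℝ × ℝ | p.1 ^ 2 + p.2 ^ 2 ≤ a} =
        Metric.closedBall 0 √a := by
      ext z
      simp only [mem_preimage, mem_ofPred_eq, Complex.measurableEquivRealProd_apply,
        mem_closedBall_zero_iff, le_sqrt (norm_nonneg z) ha, Complex.sq_norm, Complex.normSq_apply,
        ← sq]
    rw [← Complex.volume_preserving_equiv_real_prod.measure_preimage_equiv, hball,
      Complex.volume_closedBall, ← ENNReal.ofReal_pow (sqrt_nonneg a), sq_sqrt ha, mul_comm π,
      ENNReal.ofReal_mul ha, ← NNReal.coe_real_pi, ENNReal.ofReal_coe_nnreal]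

/-- The solid of revolution about the third axis whose slice at height `t` is the disc of squared
radius `ρ t`. The squared radius is prescribed, rather than the radius, so that negative values
encode empty slices. -/
def solidOfRevolution (ρ : ℝ → ℝ) : Set (ℝ × ℝ × ℝ) :=
  {q | q.1 ^ 2 + q.2.1 ^ 2 ≤ ρ q.2.2}

theorem measurableSet_solidOfRevolution {ρ : ℝ → ℝ} (hρ : Measurable ρ) :
    MeasurableSet (solidOfRevolution ρ) :=
  measurableSet_le (by fun_prop) (by fun_prop)

theorem setIntegral_solidOfRevolution {E : Type*} [NormedAddCommGroup E] [NormedSpace ℝ E]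
    {ρ : ℝ → ℝ} (hρ : Measurable ρ) {f : ℝ → E} (hf : AEStronglyMeasurable f) :
    ∫ q in solidOfRevolution ρ, f q.2.2 = π • ∫ t in {t | 0 ≤ ρ t}, ρ t • f t := by
  let S : Set ((ℝ × ℝ) × ℝ) := MeasurableEquiv.prodAssoc ⁻¹' solidOfRevolution ρ
  have hS : MeasurableSet S :=
    MeasurableEquiv.prodAssoc.measurable (measurableSet_solidOfRevolution hρ)
  have hslice (t : ℝ) : volume ((fun p : ℝ × ℝ => (p, t)) ⁻¹' S) = ENNReal.ofReal (π * ρ t) :=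
    volume_setOf_sq_add_sq_le (ρ t)
  have hfin : ∀ᵐ t : ℝ, volume ((fun p : ℝ × ℝ => (p, t)) ⁻¹' S) < ⊤ :=
    .of_forall fun t => hslice t ▸ ENNReal.ofReal_lt_top
  calc ∫ q in solidOfRevolution ρ, f q.2.2
      = ∫ z in S, f z.2 :=
        (volume_preserving_prodAssoc.setIntegral_preimage_emb
          (MeasurableEquiv.measurableEmbedding _) (fun q : ℝ × ℝ × ℝ => f q.2.2) _).symm
    _ = ∫ t, (ENNReal.ofReal (π * ρ t)).toReal • f t := by
        rw [Measure.volume_eq_prod, setIntegral_comp_snd_prod hS hfin hf]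
        simp_rw [measureReal_def, hslice]
    _ = ∫ t, {t | 0 ≤ ρ t}.indicator (fun t => π • ρ t • f t) t := by
        refine integral_congr_ae (.of_forall fun t => ?_)
        rcases lt_or_ge (ρ t) 0 with ht | ht
        · have hle : π * ρ t ≤ 0 := mul_nonpos_of_nonneg_of_nonpos pi_nonneg ht.le
          simp [ht.not_ge, ENNReal.ofReal_of_nonpos hle]
        · simp [ht, ENNReal.toReal_ofReal (mul_nonneg pi_nonneg ht), mul_smul]
    _ = π • ∫ t in {t | 0 ≤ ρ t}, ρ t • f t := by
        rw [integral_indicator (measurableSet_le measurable_const hρ), integral_smul]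

end SolidOfRevolution

theorem integral_add_mul_sub_sq_mul_inv_cube {a b : ℝ} (h : (0 : ℝ) ∉ [[a, b]]) (p q : ℝ) :
    ∫ t in a..b, (q + p * t - t ^ 2) * (t ^ 3)⁻¹ =
      p * (a⁻¹ - b⁻¹) + q / 2 * ((a ^ 2)⁻¹ - (b ^ 2)⁻¹) - (log b - log a) := by
  have hne : ∀ t ∈ [[a, b]], t ≠ 0 := fun t ht => ne_of_mem_of_not_mem ht h
  have hderiv : ∀ t ∈ [[a, b]],
      HasDerivAt (fun t => -p * t⁻¹ + -(q / 2) * (t ^ 2)⁻¹ - log t)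
        ((q + p * t - t ^ 2) * (t ^ 3)⁻¹) t := by
    intro t ht
    have ht0 := hne t ht
    have hinv := (hasDerivAt_inv ht0).const_mul (-p)
    have hinv_sq := ((hasDerivAt_pow 2 t).inv (pow_ne_zero 2 ht0)).const_mul (-(q / 2))
    refine ((hinv.add hinv_sq).sub (hasDerivAt_log ht0)).congr_deriv ?_
    field_simp
    ring
  have hcont : ContinuousOn (fun t => (q + p * t - t ^ 2) * (t ^ 3)⁻¹) [[a, b]] :=
    .mul (by fun_prop) (.inv₀ (by fun_prop) fun t ht => pow_ne_zero 3 (hne t ht))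
  rw [intervalIntegral.integral_eq_sub_of_hasDerivAt hderiv hcont.intervalIntegrable]
  ring

theorem exp_neg_two_mul (x : ℝ) : exp (-2 * x) = exp (-x) ^ 2 := by
  rw [← exp_nat_mul, Nat.cast_ofNat, mul_neg, neg_mul]

section HyperbolicCap

/-- The cap `K` of the hyperbolic ball of radius `R` about `(0, 0, 1)` cut off by the hyperbolic
plane `x² + y² + t² = e^{-2w}`, in the upper half-space model. Here `w` is a signed distance: for
negative `w` the centre of the ball belongs to the cap. -/
def hyperbolicCap (R w : ℝ) : Set (ℝ × ℝ × ℝ) :=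
  {q | q.1 ^ 2 + q.2.1 ^ 2 + (q.2.2 - cosh R) ^ 2 ≤ sinh R ^ 2 ∧
    q.1 ^ 2 + q.2.1 ^ 2 + q.2.2 ^ 2 ≤ exp (-2 * w)}

/-- The squared radius of the slice of `hyperbolicCap R w` at height `t`; it is negative where the
slice is empty. -/
noncomputable def capRadiusSq (R w t : ℝ) : ℝ :=
  min (2 * cosh R * t - 1) (exp (-2 * w)) - t ^ 2

/-- The height of the circle in which the boundary sphere of the ball meets the cutting plane of
`hyperbolicCap R w`. -/
noncomputable def contactHeight (R w : ℝ) : ℝ :=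
  exp (-w) * cosh w / cosh R

variable {R w t : ℝ}

theorem continuous_capRadiusSq (R w : ℝ) : Continuous (capRadiusSq R w) := by
  unfold capRadiusSq
  fun_prop

theorem intervalIntegrable_capRadiusSq_mul_inv_cube (R w : ℝ) {a b : ℝ}
    (h : (0 : ℝ) ∉ [[a, b]]) :
    IntervalIntegrable (fun t => capRadiusSq R w t * (t ^ 3)⁻¹) volume a b :=
  ((continuous_capRadiusSq R w).continuousOn.mul <| .inv₀ (by fun_prop) fun _ ht =>
    pow_ne_zero 3 (ne_of_mem_of_not_mem ht h)).intervalIntegrable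

theorem hyperbolicCap_eq_solidOfRevolution (R w : ℝ) :
    hyperbolicCap R w = solidOfRevolution (capRadiusSq R w) := by
  ext ⟨x, y, t⟩
  simp only [hyperbolicCap, solidOfRevolution, capRadiusSq, mem_ofPred_eq, le_sub_iff_add_le,
    le_min_iff, sinh_sq]
  refine and_congr_left' ⟨fun h => ?_, fun h => ?_⟩ <;> linarith

theorem two_mul_cosh_mul_contactHeight (R w : ℝ) :
    2 * cosh R * contactHeight R w = 1 + exp (-2 * w) := by
  have hexp : exp (-w) * exp w = 1 := by rw [← exp_add, neg_add_cancel, exp_zero]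
  rw [contactHeight, mul_assoc, mul_div_cancel₀ _ (cosh_pos R).ne', cosh_eq, exp_neg_two_mul]
  linear_combination hexp

theorem contactHeight_pos (R w : ℝ) : 0 < contactHeight R w :=
  div_pos (mul_pos (exp_pos _) (cosh_pos w)) (cosh_pos R)

theorem exp_neg_le_contactHeight (h : w ≤ R) : exp (-R) ≤ contactHeight R w := by
  have hself : exp (-R) = contactHeight R R := by
    rw [contactHeight, mul_div_cancel_right₀ _ (cosh_pos R).ne']
  have hmono : exp (-2 * R) ≤ exp (-2 * w) := exp_le_exp.2 (by linarith)
  rw [hself]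
  refine le_of_mul_le_mul_left ?_ (mul_pos two_pos (cosh_pos R))
  rw [two_mul_cosh_mul_contactHeight, two_mul_cosh_mul_contactHeight]
  gcongr

theorem contactHeight_le_exp_neg (h : |w| ≤ |R|) : contactHeight R w ≤ exp (-w) := by
  rw [contactHeight, mul_div_assoc]
  exact mul_le_of_le_one_right (exp_pos _).le ((div_le_one (cosh_pos R)).2 (cosh_le_cosh.2 h))

theorem contactHeight_le_cosh (h : exp (-2 * w) ≤ cosh (2 * R)) :
    contactHeight R w ≤ cosh R := by
  refine le_of_mul_le_mul_left ?_ (mul_pos two_pos (cosh_pos R))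
  rw [two_mul_cosh_mul_contactHeight]
  linarith [cosh_two_mul R, sinh_sq R]

theorem capRadiusSq_of_le_contactHeight (h : t ≤ contactHeight R w) :
    capRadiusSq R w t = -1 + 2 * cosh R * t - t ^ 2 := by
  have hle : 2 * cosh R * t ≤ 1 + exp (-2 * w) :=
    two_mul_cosh_mul_contactHeight R w ▸ by gcongr
  rw [capRadiusSq, min_eq_left (by linarith)]
  ring

theorem capRadiusSq_of_contactHeight_le (h : contactHeight R w ≤ t) :
    capRadiusSq R w t = exp (-2 * w) - t ^ 2 := by
  have hle : 1 + exp (-2 * w) ≤ 2 * cosh R * t :=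
    two_mul_cosh_mul_contactHeight R w ▸ by gcongr
  rw [capRadiusSq, min_eq_right (by linarith)]

theorem sq_le_two_mul_cosh_mul_sub_one_iff (hR : 0 ≤ R) :
    t ^ 2 ≤ 2 * cosh R * t - 1 ↔ t ∈ Icc (exp (-R)) (exp R) := by
  have hexp : exp (-R) * exp R = 1 := by rw [← exp_add, neg_add_cancel, exp_zero]
  have hfactor : t ^ 2 - (2 * cosh R * t - 1) = (t - exp (-R)) * (t - exp R) := by
    rw [cosh_eq]
    linear_combination -hexp
  have hle : exp (-R) ≤ exp R := exp_le_exp.2 (neg_le_self hR)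
  rw [← sub_nonpos, hfactor, sub_mul_sub_nonpos_iff t hle, mem_Icc]

theorem setOf_capRadiusSq_nonneg (hR : 0 ≤ R) (hw : -R ≤ w) :
    {t | 0 ≤ capRadiusSq R w t} = Icc (exp (-R)) (exp (-w)) := by
  have hwR : exp (-w) ≤ exp R := exp_le_exp.2 (neg_le.1 hw)
  ext t
  simp only [capRadiusSq, mem_ofPred_eq, sub_nonneg, le_min_iff,
    sq_le_two_mul_cosh_mul_sub_one_iff hR, exp_neg_two_mul, mem_Icc]
  constructor
  · rintro ⟨⟨hRt, -⟩, htw⟩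
    exact ⟨hRt, le_of_sq_le_sq htw (exp_pos _).le⟩
  · rintro ⟨hRt, htw⟩
    exact ⟨⟨hRt, htw.trans hwR⟩, pow_le_pow_left₀ ((exp_pos _).le.trans hRt) htw 2⟩

theorem integral_capRadiusSq_mul_inv_cube (hw : |w| ≤ R) :
    ∫ t in exp (-R)..exp (-w), capRadiusSq R w t * (t ^ 3)⁻¹ =
      exp R * cosh R - cosh R / contactHeight R w - R + w := by
  set s := contactHeight R w with hs
  have hRs : exp (-R) ≤ s := exp_neg_le_contactHeight (le_of_abs_le hw)
  have hsw : s ≤ exp (-w) := contactHeight_le_exp_neg (hw.trans (le_abs_self R))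
  have hs0 : 0 < s := contactHeight_pos R w
  have hzero_left : (0 : ℝ) ∉ [[exp (-R), s]] := notMem_uIcc_of_lt (exp_pos _) hs0
  have hzero_right : (0 : ℝ) ∉ [[s, exp (-w)]] := notMem_uIcc_of_lt hs0 (exp_pos _)
  have hleft : EqOn (fun t => capRadiusSq R w t * (t ^ 3)⁻¹)
      (fun t => (-1 + 2 * cosh R * t - t ^ 2) * (t ^ 3)⁻¹) [[exp (-R), s]] := fun t ht => by
    simp only [capRadiusSq_of_le_contactHeight (uIcc_of_le hRs ▸ ht).2]
  have hright : EqOn (fun t => capRadiusSq R w t * (t ^ 3)⁻¹)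
      (fun t => (exp (-2 * w) + 0 * t - t ^ 2) * (t ^ 3)⁻¹) [[s, exp (-w)]] := fun t ht => by
    simp only [capRadiusSq_of_contactHeight_le (uIcc_of_le hsw ▸ ht).1, zero_mul, add_zero]
  rw [← intervalIntegral.integral_add_adjacent_intervals
      (intervalIntegrable_capRadiusSq_mul_inv_cube R w hzero_left)
      (intervalIntegrable_capRadiusSq_mul_inv_cube R w hzero_right),
    intervalIntegral.integral_congr hleft, intervalIntegral.integral_congr hright,
    integral_add_mul_sub_sq_mul_inv_cube hzero_left,
    integral_add_mul_sub_sq_mul_inv_cube hzero_right, log_exp, log_exp]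
  have hcontact : (1 + exp (-2 * w)) * (s ^ 2)⁻¹ = 2 * (cosh R / s) := by
    rw [← two_mul_cosh_mul_contactHeight R w, ← hs]
    field_simp
  have hplane : exp (-2 * w) * (exp (-w) ^ 2)⁻¹ = 1 := by
    rw [exp_neg_two_mul, mul_inv_cancel₀ (pow_ne_zero 2 (exp_ne_zero _))]
  have hbottom : 2 * (exp R * cosh R) = (exp (-R) ^ 2)⁻¹ + 1 := by
    rw [cosh_eq, exp_neg]
    field_simp
  rw [← exp_neg, neg_neg]
  linear_combination (1 / 2) * hcontact - (1 / 2) * hplane + (1 / 2) * hbottom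

theorem setIntegral_hyperbolicCap (hw : |w| ≤ R) :
    ∫ q in hyperbolicCap R w, (q.2.2 ^ 3)⁻¹ =
      π * (exp R * cosh R - cosh R / contactHeight R w - R + w) := by
  have hwR : exp (-R) ≤ exp (-w) := exp_le_exp.2 (neg_le_neg (le_of_abs_le hw))
  have hmeas : AEStronglyMeasurable fun t : ℝ => (t ^ 3)⁻¹ :=
    (measurable_id.pow_const 3).inv.aestronglyMeasurable
  rw [hyperbolicCap_eq_solidOfRevolution,
    setIntegral_solidOfRevolution (continuous_capRadiusSq R w).measurable hmeas,
    setOf_capRadiusSq_nonneg ((abs_nonneg w).trans hw) (neg_le_of_abs_le hw),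
    integral_Icc_eq_integral_Ioc, ← intervalIntegral.integral_of_le hwR]
  simp only [smul_eq_mul, integral_capRadiusSq_mul_inv_cube hw]

theorem eps_sq (hw : |w| ≤ |R|) : eps R w ^ 2 = exp (-2 * w) - contactHeight R w ^ 2 := by
  have hratio : cosh w ^ 2 / cosh R ^ 2 ≤ 1 :=
    div_le_one_of_le₀ (pow_le_pow_left₀ (cosh_pos w).le (cosh_le_cosh.2 hw) 2) (sq_nonneg _)
  rw [eps, mul_pow, sq_sqrt (sub_nonneg.2 hratio), contactHeight, exp_neg_two_mul]
  ring

theorem Lfun_eps (hw : |w| ≤ |R|) (hlower : exp (-2 * w) ≤ cosh (2 * R)) :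
    Lfun R (eps R w) = contactHeight R w := by
  have hsquare : sinh R ^ 2 - eps R w ^ 2 = (cosh R - contactHeight R w) ^ 2 := by
    rw [eps_sq hw, sinh_sq]
    linear_combination two_mul_cosh_mul_contactHeight R w
  rw [Lfun, hsquare, sqrt_sq (sub_nonneg.2 (contactHeight_le_cosh hlower)), sub_sub_cancel]

end HyperbolicCap

theorem stmt16_general (w R : ℝ) (hw : |w| ≤ R) (hlower : exp (-2 * w) ≤ cosh (2 * R)) :
    (∫ q in {q : ℝ × ℝ × ℝ |
        q.1 ^ 2 + q.2.1 ^ 2 + (q.2.2 - cosh R) ^ 2 ≤ sinh R ^ 2 ∧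
        q.1 ^ 2 + q.2.1 ^ 2 + q.2.2 ^ 2 ≤ exp (-2 * w)}, (q.2.2 ^ 3)⁻¹) =
      π * (exp R * cosh R - cosh R / Lfun R (eps R w) - log (Lfun R (eps R w)) - R +
        (1 / 2) * log (exp (-2 * w) - eps R w ^ 2) + w) := by
  have hw' : |w| ≤ |R| := hw.trans (le_abs_self R)
  have hlog : log (exp (-2 * w) - eps R w ^ 2) = 2 * log (contactHeight R w) := by
    rw [eps_sq hw', sub_sub_cancel, log_pow, Nat.cast_ofNat]
  rw [← hyperbolicCap, setIntegral_hyperbolicCap hw, Lfun_eps hw' hlower, hlog]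
  ring

/-- Let `0 < w < R` and let `K ⊂ ℝ³` be the set of points `(x, y, t)` with
`x² + y² + (t − cosh R)² ≤ sinh²R` and `x² + y² + t² ≤ e^{−2w}`. Then the Lebesgue
integral of `t⁻³` over `K` equals
`π(e^R cosh R − cosh R/L(ε) − log L(ε) − R + (1/2) log(e^{−2w} − ε²) + w)`. -/
theorem stmt16 (w R : ℝ) (h1 : 0 < w) (h2 : w < R) :
    (∫ q in {q : ℝ × ℝ × ℝ |
        q.1 ^ 2 + q.2.1 ^ 2 + (q.2.2 - Real.cosh R) ^ 2 ≤ Real.sinh R ^ 2 ∧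
        q.1 ^ 2 + q.2.1 ^ 2 + q.2.2 ^ 2 ≤ Real.exp (-2 * w)}, (q.2.2 ^ 3)⁻¹) =
      Real.pi * (Real.exp R * Real.cosh R - Real.cosh R / Lfun R (eps R w) -
        Real.log (Lfun R (eps R w)) - R +
        (1 / 2) * Real.log (Real.exp (-2 * w) - eps R w ^ 2) + w) := by
  refine stmt16_general w R (abs_le.2 ⟨by linarith, h2.le⟩) ?_
  exact (Real.exp_le_one_iff.2 (by linarith)).trans (Real.one_le_cosh _)
end
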